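/- arXiv:1404.7764 — 2 statements merged into one kernel-verified Lean document; each statement's English description precedes it below -/
import Mathlib

section
/- For every integer b ≥ 2 there exist a constant c > 0 and an integer d₀ such that for all d ≥ d₀, every d-regular graph G has a spanning subgraph H containing no copy of the complete bipartite graph K_{2,b} and with minimum degree δ(H) ≥ c·√d. -/
open SimpleGraph

def ContainsCopy {α β : Type*} (F : SimpleGraph α) (H : SimpleGraph β) : Prop :=
  ∃ f : F →g H, Function.Injective f

abbrev GraphFamily := Set (Σ n : ℕ, SimpleGraph (Fin n))

def FamFree {β : Type*} (H : SimpleGraph β) (𝓕 : GraphFamily) : Prop :=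
  ∀ F ∈ 𝓕, ¬ ContainsCopy F.2 H

noncomputable def extremalNum (n : ℕ) (𝓕 : GraphFamily) : ℕ :=
  sSup {k | ∃ H : SimpleGraph (Fin n), FamFree H 𝓕 ∧ k = H.edgeSet.ncard}

def LocallyInjective {α β : Type*} {F : SimpleGraph α} {G : SimpleGraph β}
    (φ : F →g G) : Prop :=
  ∀ v : α, Set.InjOn φ (F.neighborSet v)

def NoLocInjHom {α β : Type*} (F : SimpleGraph α) (G : SimpleGraph β) : Prop :=
  ¬ ∃ φ : F →g G, LocallyInjective φ

def ClosedFamily (𝓕 : GraphFamily) : Prop :=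
  ∀ (W : Type) [Fintype W] (G : SimpleGraph W),
    (∀ F ∈ 𝓕, NoLocInjHom F.2 G) ↔ FamFree G 𝓕

noncomputable def deg {β : Type*} (H : SimpleGraph β) (v : β) : ℕ :=
  (H.neighborSet v).ncard

noncomputable def minDeg {β : Type*} [Fintype β] (H : SimpleGraph β) : ℕ :=
  ⨅ v, deg H v

noncomputable def maxDeg {β : Type*} [Fintype β] (H : SimpleGraph β) : ℕ :=
  ⨆ v, deg H v

def RegularDeg {β : Type*} (G : SimpleGraph β) (d : ℕ) : Prop :=
  ∀ v, deg G v = d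

noncomputable def Bad {α γ : Type*} (G : SimpleGraph α) (χ : α → γ) (v : α) : ℕ :=
  {u | u ∈ G.neighborSet v ∧ ∃ v', v' ∈ G.neighborSet u ∧ v' ≠ v ∧ χ v' = χ v}.ncard

/-!
A maximum cut gives a bipartite `B ≤ G` whose degrees lie between `d / 2` and `d`. Colour the
vertices by points of the plane over a field of order `q ≈ √d`, and call `(a, b)` and `(a', b')`
related when `b + b' = a * a'`; this relation has no 4-cycle. Every vertex `u`, as a client, picks
a set `S u` of `r ≈ √d` neighbours, its servers, whose colours are distinct and related to that of
`u`, in such a way that clients of the same colour have disjoint sets of servers. The parity of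
`a + a'` is required to tell the side of the client, which prevents a server and a client of the
same vertex from having the same colour. Hence the colouring is injective on neighbourhoods in the
graph of all client-server pairs, and that graph has no 4-cycle either.

For such a choice to exist, colour at random from a palette of about `d / C` colours. A vertex
sharing its colour with too many vertices at distance two serves nobody and is recoloured by a
colour outside the palette. By the local lemma, each vertex still sees a constant proportion of the
colours it is looking for among the servers around it, and then the new colours and the sets `S u`
are found together by a matching theorem of Haxell's type for hypergraphs.
-/

namespace HypergraphMatching

open Finset Function

variable {ι ρ : Type*} {E : ι → Finset ρ → Prop} {r : ℕ}
  {D : Finset ι} {M M₁ M₂ : ι → Finset ρ} {X Y e : Finset ρ} {u u₀ w : ι}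

/-- `M` chooses for every index `u ∈ D` a hyperedge of the hypergraph `E u`, and the chosen
hyperedges are pairwise disjoint. -/
structure IsMatching (E : ι → Finset ρ → Prop) (D : Finset ι) (M : ι → Finset ρ) : Prop where
  admissible : ∀ u ∈ D, E u (M u)
  pairwiseDisjoint : (D : Set ι).PairwiseDisjoint M

/-- Haxell's condition on a family of hypergraphs of rank at most `r`: the hyperedges available to
a nonempty set `C` of indices cannot be covered by `(2r - 1)(|C| - 1)` points. -/
structure HaxellCondition (E : ι → Finset ρ → Prop) (r : ℕ) : Prop where
  card_le : ∀ u e, E u e → #e ≤ r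
  exists_disjoint : ∀ C : Finset ι, C.Nonempty → ∀ T : Finset ρ, #T ≤ (2 * r - 1) * (#C - 1) →
    ∃ u ∈ C, ∃ e, E u e ∧ Disjoint e T

section Blockers

variable [DecidableEq ρ]

/-- The indices in `D` whose chosen hyperedge meets `X`. -/
def blockers (D : Finset ι) (M : ι → Finset ρ) (X : Finset ρ) : Finset ι :=
  {w ∈ D | ¬ Disjoint (M w) X}

/-- `M'` arises from `M` without moving a hyperedge onto `X`. -/
def AgreesOnBlockers (D : Finset ι) (X : Finset ρ) (M M' : ι → Finset ρ) : Prop :=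
  ∀ w ∈ blockers D M' X, M' w = M w

lemma mem_blockers : w ∈ blockers D M X ↔ w ∈ D ∧ ¬ Disjoint (M w) X := mem_filter

lemma AgreesOnBlockers.blockers_subset (h : AgreesOnBlockers D X M M₁) :
    blockers D M₁ X ⊆ blockers D M X := fun w hw ↦
  mem_blockers.2 ⟨(mem_blockers.1 hw).1, h w hw ▸ (mem_blockers.1 hw).2⟩

lemma AgreesOnBlockers.trans (h₁ : AgreesOnBlockers D X M M₁) (h₂ : AgreesOnBlockers D X M₁ M₂) :
    AgreesOnBlockers D X M M₂ := fun w hw ↦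
  (h₂ w hw).trans (h₁ w (h₂.blockers_subset hw))

lemma AgreesOnBlockers.mono (hXY : X ⊆ Y) (h : AgreesOnBlockers D Y M M₁) :
    AgreesOnBlockers D X M M₁ := fun w hw ↦
  h w (mem_blockers.2 ⟨(mem_blockers.1 hw).1, fun hY ↦ (mem_blockers.1 hw).2 (hY.mono_right hXY)⟩)

lemma card_union_biUnion_blockers_le (hcard : ∀ w ∈ D, #(M w) ≤ r)
    (hX : #X ≤ r * #(blockers D M X)) :
    #(X ∪ (blockers D M X).biUnion M) ≤ (2 * r - 1) * #(blockers D M X) := by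
  have hsdiff : ∀ w ∈ blockers D M X, #(M w \ X) ≤ r - 1 := by
    intro w hw
    obtain ⟨hwD, hwX⟩ := mem_blockers.1 hw
    have hinter : 0 < #(M w ∩ X) := by rwa [card_pos, ← not_disjoint_iff_nonempty_inter]
    have := card_sdiff_add_card_inter (M w) X
    have := hcard w hwD
    omega
  calc #(X ∪ (blockers D M X).biUnion M)
      = #(X ∪ (blockers D M X).biUnion fun w ↦ M w \ X) := by
        congr 1; ext x; simp only [mem_union, mem_biUnion, mem_sdiff]; tauto
    _ ≤ r * #(blockers D M X) + #(blockers D M X) * (r - 1) :=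
        (card_union_le _ _).trans (add_le_add hX (card_biUnion_le_card_mul _ _ _ hsdiff))
    _ ≤ (2 * r - 1) * #(blockers D M X) := by
        rw [mul_comm #(blockers D M X), ← add_mul]
        rcases r.eq_zero_or_pos with rfl | hr
        · simp
        · exact Nat.mul_le_mul_right _ (by omega)

variable [DecidableEq ι]

lemma blockers_union : blockers D M (X ∪ Y) = blockers D M X ∪ blockers D M Y := by
  simp only [blockers, disjoint_union_right, not_and_or, filter_or]

lemma IsMatching.update (hM : IsMatching E D M) (he : E u e) (hfree : blockers D M e = ∅) :
    IsMatching E (insert u D) (update M u e) := by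
  have hdisj : ∀ w ∈ D, Disjoint (M w) e := by
    simpa [blockers, filter_eq_empty_iff] using hfree
  refine ⟨fun w hw ↦ ?_, fun v hv w hw hvw ↦ ?_⟩
  · rcases eq_or_ne w u with rfl | hwu
    · simpa using he
    · simpa [hwu] using hM.admissible w (mem_of_mem_insert_of_ne hw hwu)
  · rcases eq_or_ne v u with rfl | hvu
    · simpa [onFun, hvw.symm] using (hdisj w (mem_of_mem_insert_of_ne hw hvw.symm)).symm
    have hvD := mem_of_mem_insert_of_ne hv hvu
    rcases eq_or_ne w u with rfl | hwu
    · simpa [onFun, hvw] using hdisj v hvD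
    · simpa [onFun, hvu, hwu] using
        hM.pairwiseDisjoint hvD (mem_of_mem_insert_of_ne hw hwu) hvw

lemma HaxellCondition.exists_disjoint_of_blockers (h : HaxellCondition E r)
    (hM : IsMatching E D M) (hu₀ : u₀ ∉ D) (hX : #X ≤ r * #(blockers D M X)) :
    ∃ u ∈ insert u₀ (blockers D M X), ∃ e, E u e ∧ Disjoint e X ∧
      ∀ w ∈ blockers D M X, Disjoint e (M w) := by
  have hu₀B : u₀ ∉ blockers D M X := fun hmem ↦ hu₀ (mem_blockers.1 hmem).1
  obtain ⟨u, hu, e, he, hdisj⟩ := h.exists_disjoint _ (insert_nonempty u₀ (blockers D M X))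
    (X ∪ (blockers D M X).biUnion M) <| by
      simpa [card_insert_of_notMem hu₀B] using
        card_union_biUnion_blockers_le (fun w hw ↦ h.card_le w _ (hM.admissible w hw)) hX
  rw [disjoint_union_right, disjoint_biUnion_right] at hdisj
  exact ⟨u, hu, e, he, hdisj⟩

lemma AgreesOnBlockers.update (h : AgreesOnBlockers D X M M₁) (heX : Disjoint e X) :
    AgreesOnBlockers D X M (update M₁ u e) ∧ u ∉ blockers D (update M₁ u e) X := by
  have hu : u ∉ blockers D (Function.update M₁ u e) X := by simp [mem_blockers, heX]
  refine ⟨fun w hw ↦ ?_, hu⟩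
  have hwu : w ≠ u := ne_of_mem_of_not_mem hw hu
  rw [update_of_ne hwu]
  exact h w (by simpa [mem_blockers, hwu] using hw)

/-- The alternating-tree argument: while the matching cannot be extended to `u₀`, the set of
hyperedges meeting a small set `X` can always be changed. -/
lemma HaxellCondition.exists_blockers_ne (h : HaxellCondition E r) (hu₀ : u₀ ∉ D)
    (hmax : ∀ M', ¬ IsMatching E (insert u₀ D) M') (hM : IsMatching E D M)
    (hX : #X ≤ r * #(blockers D M X)) :
    ∃ M', IsMatching E D M' ∧ AgreesOnBlockers D X M M' ∧ blockers D M' X ≠ blockers D M X := by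
  induction hn : #D - #(blockers D M X) using Nat.strong_induction_on generalizing M X with
  | _ n ih =>
  subst hn
  by_contra! hrigid
  obtain ⟨u, hu, e, he, heX, heM⟩ := h.exists_disjoint_of_blockers hM hu₀ hX
  obtain ⟨M₁, ⟨hM₁, hagree₁⟩, hmin⟩ := (measure fun M' ↦ #(blockers D M' e)).wf.has_min
    {M' | IsMatching E D M' ∧ AgreesOnBlockers D X M M'} ⟨M, hM, fun _ _ ↦ rfl⟩
  have hblockers₁ := hrigid M₁ hM₁ hagree₁
  rcases (blockers D M₁ e).eq_empty_or_nonempty with hfree | hblocked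
  · have hupdate := hM₁.update he hfree
    obtain ⟨hagree, hnotMem⟩ := hagree₁.update (u := u) heX
    rcases mem_insert.1 hu with rfl | hu
    · exact hmax _ hupdate
    · rw [insert_eq_of_mem (mem_blockers.1 hu).1] at hupdate
      exact hnotMem (hrigid _ hupdate hagree ▸ hu)
  have hdisj : Disjoint (blockers D M₁ X) (blockers D M₁ e) := disjoint_left.2 fun w hwX hwe ↦
    (mem_blockers.1 hwe).2 <| hagree₁ w hwX ▸ (heM w (hblockers₁ ▸ hwX)).symm
  have hcard : #(blockers D M₁ (X ∪ e)) = #(blockers D M X) + #(blockers D M₁ e) := by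
    rw [blockers_union, card_union_of_disjoint hdisj, hblockers₁]
  have hcardD : #(blockers D M₁ (X ∪ e)) ≤ #D := card_le_card (filter_subset _ _)
  have hpos := hblocked.card_pos
  have hXe : #(X ∪ e) ≤ r * #(blockers D M₁ (X ∪ e)) := by
    have := card_union_le X e
    have := h.card_le u e he
    rw [hcard]
    nlinarith
  obtain ⟨M₂, hM₂, hagree₂, hne⟩ := ih _ (by omega) hM₁ hXe rfl
  have hagree : AgreesOnBlockers D X M M₂ := hagree₁.trans (hagree₂.mono subset_union_left)
  have heq : blockers D M₂ e = blockers D M₁ e := eq_of_subset_of_card_le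
    (hagree₂.mono subset_union_right).blockers_subset (not_lt.1 (hmin M₂ ⟨hM₂, hagree⟩))
  exact hne (by rw [blockers_union, blockers_union, heq, hrigid M₂ hM₂ hagree, hblockers₁])

end Blockers

theorem HaxellCondition.exists_isMatching (h : HaxellCondition E r) (D : Finset ι) :
    ∃ M, IsMatching E D M := by
  classical
  induction D using Finset.induction_on with
  | empty => exact ⟨fun _ ↦ ∅, by simp, by simp⟩
  | insert u₀ D hu₀ ih =>
    obtain ⟨M, hM⟩ := ih
    by_contra! hmax
    obtain ⟨M', -, -, hne⟩ := h.exists_blockers_ne (X := ∅) hu₀ hmax hM (by simp)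
    exact hne (by simp [blockers])

end HypergraphMatching

namespace FractionalSelection

open Finset Function HypergraphMatching

variable {ι κ V : Type*} [DecidableEq κ] [DecidableEq V]

lemma sum_card_filter_mk_mem (K : Finset κ) (W : κ → Finset V) (T : Finset (κ × V)) :
    ∑ x ∈ K, #{v ∈ W x | (x, v) ∈ T} = #{p ∈ T | p.1 ∈ K ∧ p.2 ∈ W p.1} := by
  rw [card_eq_sum_card_fiberwise (f := Prod.fst) (t := K)
    fun p hp ↦ (mem_filter.1 hp).2.1]
  refine sum_congr rfl fun x hx ↦ ?_
  refine card_bij' (fun v _ ↦ (x, v)) (fun p _ ↦ p.2) ?_ ?_ ?_ ?_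
  all_goals aesop

variable [Fintype ι] {A : ι → Finset κ} {R : ι → κ → Finset V} {L r : ℕ}

lemma sum_average_card_le
    (hload : ∀ x v, ∑ u with x ∈ A u ∧ v ∈ R u x, (#(A u) : ℚ)⁻¹ ≤ L)
    (C : Finset ι) (T : Finset (κ × V)) :
    ∑ u ∈ C, (#(A u) : ℚ)⁻¹ * (∑ x ∈ A u, #{v ∈ R u x | (x, v) ∈ T} : ℕ) ≤ L * #T := calc
  _ = ∑ u ∈ C, ∑ p ∈ T with p.1 ∈ A u ∧ p.2 ∈ R u p.1, (#(A u) : ℚ)⁻¹ := by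
    refine sum_congr rfl fun u _ ↦ ?_
    rw [sum_card_filter_mk_mem, sum_const, nsmul_eq_mul, mul_comm]
  _ = ∑ p ∈ T, ∑ u ∈ C with p.1 ∈ A u ∧ p.2 ∈ R u p.1, (#(A u) : ℚ)⁻¹ :=
    sum_comm' (by simp; tauto)
  _ ≤ ∑ _p ∈ T, (L : ℚ) := sum_le_sum fun p _ ↦
    (sum_le_sum_of_subset_of_nonneg (filter_subset_filter _ (subset_univ C))
      fun _ _ _ ↦ by positivity).trans (hload p.1 p.2)
  _ = L * #T := by rw [sum_const, nsmul_eq_mul, mul_comm]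

/-- The hyperedges available to `u` are the `r`-sets of admissible servers in one colour layer. -/
lemma haxellCondition_of_load (hA : ∀ u, (A u).Nonempty)
    (hR : ∀ u, ∀ x ∈ A u, (2 * L + 1) * r ≤ #(R u x))
    (hload : ∀ x v, ∑ u with x ∈ A u ∧ v ∈ R u x, (#(A u) : ℚ)⁻¹ ≤ L) :
    HaxellCondition (fun u (e : Finset (κ × V)) ↦
      ∃ x ∈ A u, ∃ S ⊆ R u x, #S = r ∧ e = S.map (Embedding.sectR x V)) r := by
  refine ⟨by rintro u _ ⟨x, -, S, -, hS, rfl⟩; rw [card_map, hS], fun C hC T hT ↦ ?_⟩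
  by_contra! hcover
  have hcovered : ∀ u ∈ C, ∀ x ∈ A u, 2 * L * r + 1 ≤ #{v ∈ R u x | (x, v) ∈ T} := by
    intro u hu x hx
    have hfree : #{v ∈ R u x | (x, v) ∉ T} < r := by
      by_contra! hr
      obtain ⟨S, hS, hScard⟩ := exists_subset_card_eq hr
      refine hcover u hu _ ⟨x, hx, S, hS.trans (filter_subset _ _), hScard, rfl⟩ ?_
      exact disjoint_left.2 fun p hp ↦ by
        obtain ⟨v, hv, rfl⟩ := mem_map.1 hp
        exact (mem_filter.1 (hS hv)).2
    have := card_filter_add_card_filter_not (s := R u x) fun v ↦ (x, v) ∈ T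
    linarith [hR u x hx]
  have hlower : (#C * (2 * L * r + 1) : ℚ) ≤ L * #T := by
    refine le_trans ?_ (sum_average_card_le hload C T)
    rw [← nsmul_eq_mul]
    refine card_nsmul_le_sum _ _ _ fun u hu ↦ ?_
    rw [le_inv_mul_iff₀ (mod_cast (hA u).card_pos)]
    exact_mod_cast card_nsmul_le_sum _ _ _ (hcovered u hu)
  have hupper : L * #T ≤ #C * (2 * L * r) := calc
    L * #T ≤ L * (2 * r * #C) := by
      gcongr
      exact hT.trans (Nat.mul_le_mul (Nat.sub_le _ _) (Nat.sub_le _ _))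
    _ = #C * (2 * L * r) := by ring
  have hlower' : #C * (2 * L * r + 1) ≤ L * #T := mod_cast hlower
  linarith [hC.card_pos]

theorem exists_selection (hA : ∀ u, (A u).Nonempty)
    (hR : ∀ u, ∀ x ∈ A u, (2 * L + 1) * r ≤ #(R u x))
    (hload : ∀ x v, ∑ u with x ∈ A u ∧ v ∈ R u x, (#(A u) : ℚ)⁻¹ ≤ L) :
    ∃ (f : ι → κ) (S : ι → Finset V), (∀ u, f u ∈ A u) ∧ (∀ u, S u ⊆ R u (f u)) ∧
      (∀ u, #(S u) = r) ∧ ∀ u v, u ≠ v → f u = f v → Disjoint (S u) (S v) := by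
  obtain ⟨M, hM⟩ := (haxellCondition_of_load hA hR hload).exists_isMatching univ
  choose f hf S hS hcard hMS using fun u ↦ hM.admissible u (mem_univ u)
  refine ⟨f, S, hf, hS, hcard, fun u v huv hfuv ↦ ?_⟩
  have hdisj := hM.pairwiseDisjoint (mem_coe.2 (mem_univ u)) (mem_coe.2 (mem_univ v)) huv
  rwa [onFun, hMS u, hMS v, hfuv, disjoint_map] at hdisj

end FractionalSelection

namespace UniformProbability

open Finset
open scoped BigOperators

section Basic

variable {Ω : Type*} [Fintype Ω] {E F : Ω → Prop}

open Classical in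
/-- The probability of the event `E` under the uniform distribution on a finite sample space. -/
noncomputable def uniformProb (E : Ω → Prop) : ℝ := 𝔼 ω, if E ω then 1 else 0

lemma uniformProb_nonneg (E : Ω → Prop) : 0 ≤ uniformProb E :=
  expect_nonneg fun _ _ ↦ by split_ifs <;> norm_num

lemma uniformProb_mono (h : ∀ ω, E ω → F ω) : uniformProb E ≤ uniformProb F :=
  expect_le_expect fun ω _ ↦ by by_cases E ω <;> by_cases F ω <;> simp_all

lemma uniformProb_true [Nonempty Ω] : uniformProb (fun _ : Ω ↦ True) = 1 := by
  simp [uniformProb]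

lemma uniformProb_or_le : uniformProb (fun ω ↦ E ω ∨ F ω) ≤ uniformProb E + uniformProb F := by
  rw [uniformProb, uniformProb, uniformProb, ← expect_add_distrib]
  exact expect_le_expect fun ω _ ↦ by by_cases E ω <;> by_cases F ω <;> simp [*]

lemma uniformProb_exists_le {α : Type*} (s : Finset α) (E : α → Ω → Prop) :
    uniformProb (fun ω ↦ ∃ a ∈ s, E a ω) ≤ ∑ a ∈ s, uniformProb (E a) := by
  induction s using Finset.cons_induction with
  | empty => simp [uniformProb]
  | cons a s ha ih =>
    simp only [mem_cons, exists_eq_or_imp, sum_cons]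
    exact uniformProb_or_le.trans (by gcongr)

lemma exists_of_uniformProb_pos (h : 0 < uniformProb E) : ∃ ω, E ω := by
  by_contra! hE
  simp [uniformProb, hE] at h

end Basic

section Resampling

variable {V P : Type*} [Fintype V] [DecidableEq V] [Fintype P]

lemma expect_expect_piecewise (I : Finset V) (f : (V → P) → ℝ) :
    𝔼 c₀, 𝔼 c₁, f (I.piecewise c₁ c₀) = 𝔼 c, f c := by
  have hswap : Function.Involutive fun p : (V → P) × (V → P) ↦
      (I.piecewise p.2 p.1, I.piecewise p.1 p.2) := by
    rintro ⟨c₀, c₁⟩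
    ext v <;> by_cases hv : v ∈ I <;> simp [hv]
  rcases isEmpty_or_nonempty (V → P) with _ | _
  · simp
  calc 𝔼 c₀, 𝔼 c₁, f (I.piecewise c₁ c₀)
      = 𝔼 p : (V → P) × (V → P), f (I.piecewise p.2 p.1) := by
        rw [← univ_product_univ,
          expect_product' univ univ fun c₀ c₁ : V → P ↦ f (I.piecewise c₁ c₀)]
    _ = 𝔼 p : (V → P) × (V → P), f p.1 :=
        Fintype.expect_equiv hswap.toPerm _ _ fun _ ↦ rfl
    _ = 𝔼 c, f c := by
        rw [← univ_product_univ, expect_product' univ univ fun c _ ↦ f c]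
        simp

variable {E F : (V → P) → Prop} {I : Finset V}

lemma uniformProb_le_of_resample [Nonempty P] {η : ℝ}
    (h : ∀ c₀ : V → P, uniformProb (fun c₁ ↦ E (I.piecewise c₁ c₀)) ≤ η) :
    uniformProb E ≤ η := by
  rw [uniformProb, ← expect_expect_piecewise I]
  exact expect_le univ_nonempty fun c₀ _ ↦ h c₀

lemma uniformProb_and_of_dependsOn (hE : DependsOn E I) (hF : DependsOn F (I : Set V)ᶜ) :
    uniformProb (fun c ↦ E c ∧ F c) = uniformProb E * uniformProb F := by
  rw [uniformProb, ← expect_expect_piecewise I, mul_comm, uniformProb, uniformProb,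
    Fintype.expect_mul_expect]
  refine expect_congr rfl fun c₀ _ ↦ expect_congr rfl fun c₁ _ ↦ ?_
  have hE₁ : E (I.piecewise c₁ c₀) = E c₁ := hE fun v hv ↦ I.piecewise_eq_of_mem _ _ hv
  have hF₀ : F (I.piecewise c₁ c₀) = F c₀ := hF fun v hv ↦ I.piecewise_eq_of_notMem _ _ hv
  rw [hE₁, hF₀]
  by_cases E c₁ <;> by_cases F c₀ <;> simp [*]

end Resampling

section LocalLemma

lemma uniformProb_avoid_le {Ω ι : Type*} [Fintype Ω] [DecidableEq ι] (E : ι → Ω → Prop)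
    (K J : Finset ι) :
    uniformProb (fun ω ↦ ∀ j ∈ K, ¬ E j ω) ≤ uniformProb (fun ω ↦ ∀ j ∈ J, ¬ E j ω) +
      ∑ j ∈ J \ K, uniformProb (fun ω ↦ E j ω ∧ ∀ j ∈ K, ¬ E j ω) := by
  refine le_trans (uniformProb_mono fun ω hω ↦ ?_) (uniformProb_or_le.trans
    (add_le_add_right (uniformProb_exists_le _ _) _))
  by_cases hJ : ∀ j ∈ J, ¬ E j ω
  · exact Or.inl hJ
  · push Not at hJ
    obtain ⟨j, hjJ, hj⟩ := hJ
    exact Or.inr ⟨j, mem_sdiff.2 ⟨hjJ, fun hjK ↦ hω j hjK hj⟩, hj, hω⟩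

variable {V P ι : Type*} [Fintype V] [DecidableEq V] [Fintype P] [Fintype ι]
  {E : ι → (V → P) → Prop} {vars : ι → Finset V} {p : ℝ} {D : ℕ}

lemma uniformProb_and_avoid_le (hvars : ∀ i, DependsOn (E i) (vars i : Set V))
    (hp : ∀ i, uniformProb (E i) ≤ p) (hD : ∀ i, #{j | ¬ Disjoint (vars i) (vars j)} ≤ D)
    (hpD : 4 * p * D ≤ 1) (J : Finset ι) (i : ι) :
    uniformProb (fun c ↦ E i c ∧ ∀ j ∈ J, ¬ E j c) ≤
      2 * p * uniformProb (fun c ↦ ∀ j ∈ J, ¬ E j c) := by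
  classical
  induction J using Finset.strongInduction generalizing i with
  | H J ih =>
  have hp0 : 0 ≤ p := (uniformProb_nonneg _).trans (hp i)
  let K := {j ∈ J | Disjoint (vars i) (vars j)}
  have hKJ : K ⊆ J := filter_subset _ _
  have hindep : uniformProb (fun c ↦ E i c ∧ ∀ j ∈ K, ¬ E j c) ≤
      p * uniformProb (fun c ↦ ∀ j ∈ K, ¬ E j c) := by
    rw [uniformProb_and_of_dependsOn (hvars i)]
    · exact mul_le_mul_of_nonneg_right (hp i) (uniformProb_nonneg _)
    · refine fun c c' hcc' ↦ propext (forall₂_congr fun j hj ↦ not_congr (iff_of_eq ?_))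
      exact hvars j fun v hv ↦ hcc' v (disjoint_right.1 (mem_filter.1 hj).2 hv)
  have hsplit : uniformProb (fun c ↦ ∀ j ∈ K, ¬ E j c) ≤
      2 * uniformProb (fun c ↦ ∀ j ∈ J, ¬ E j c) := by
    rcases hKJ.eq_or_ssubset with hK | hK
    · rw [hK]
      linarith [uniformProb_nonneg fun c ↦ ∀ j ∈ J, ¬ E j c]
    have hcard : (#(J \ K) : ℝ) ≤ D := by
      refine mod_cast (card_le_card fun j hj ↦ ?_).trans (hD i)
      obtain ⟨hjJ, hjK⟩ := mem_sdiff.1 hj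
      exact mem_filter.2 ⟨mem_univ j, fun hdisj ↦ hjK (mem_filter.2 ⟨hjJ, hdisj⟩)⟩
    have hsum : ∑ j ∈ J \ K, uniformProb (fun c ↦ E j c ∧ ∀ j ∈ K, ¬ E j c) ≤
        D * (2 * p * uniformProb (fun c ↦ ∀ j ∈ K, ¬ E j c)) := by
      refine (sum_le_card_nsmul _ _ _ fun j _ ↦ ih K hK j).trans ?_
      rw [nsmul_eq_mul]
      exact mul_le_mul_of_nonneg_right hcard
        (mul_nonneg (by positivity) (uniformProb_nonneg _))
    have hK0 := uniformProb_nonneg fun c ↦ ∀ j ∈ K, ¬ E j c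
    nlinarith [uniformProb_avoid_le E K J]
  calc uniformProb (fun c ↦ E i c ∧ ∀ j ∈ J, ¬ E j c)
      ≤ uniformProb (fun c ↦ E i c ∧ ∀ j ∈ K, ¬ E j c) :=
        uniformProb_mono fun c hc ↦ ⟨hc.1, fun j hj ↦ hc.2 j (hKJ hj)⟩
    _ ≤ p * (2 * uniformProb (fun c ↦ ∀ j ∈ J, ¬ E j c)) :=
        hindep.trans (mul_le_mul_of_nonneg_left hsplit hp0)
    _ = 2 * p * uniformProb (fun c ↦ ∀ j ∈ J, ¬ E j c) := by ring

theorem lovasz_local_lemma [Nonempty P] (hvars : ∀ i, DependsOn (E i) (vars i : Set V))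
    (hp : ∀ i, uniformProb (E i) ≤ p) (hD : ∀ i, #{j | ¬ Disjoint (vars i) (vars j)} ≤ D)
    (hD0 : 0 < D) (hpD : 4 * p * D ≤ 1) : ∃ c, ∀ i, ¬ E i c := by
  classical
  have hpos : ∀ J : Finset ι, 0 < uniformProb fun c ↦ ∀ j ∈ J, ¬ E j c := by
    intro J
    induction J using Finset.induction_on with
    | empty => simp [uniformProb_true]
    | insert i J hi ih =>
      have hp0 : 0 ≤ p := (uniformProb_nonneg _).trans (hp i)
      have h4p : 4 * p ≤ 1 := by
        have : (1 : ℝ) ≤ D := mod_cast hD0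
        nlinarith
      have hsplit := uniformProb_avoid_le E J (insert i J)
      rw [insert_sdiff_cancel hi, sum_singleton] at hsplit
      nlinarith [uniformProb_and_avoid_le hvars hp hD hpD J i]
  obtain ⟨c, hc⟩ := exists_of_uniformProb_pos (hpos univ)
  exact ⟨c, fun i ↦ hc i (mem_univ i)⟩

end LocalLemma

section Concentration

variable {V P : Type*} [Fintype V] [Fintype P] [DecidableEq V]

lemma expect_prod_apply (f : V → P → ℝ) :
    𝔼 c : V → P, ∏ v, f v (c v) = ∏ v, 𝔼 p, f v p := by
  simp only [Fintype.expect_eq_sum_div_card, prod_div_distrib, prod_univ_sum,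
    Fintype.piFinset_univ, Fintype.card_fun, prod_const, card_univ, Nat.cast_pow]

variable [Nonempty P]

/-- Markov's inequality for `∏ v, exp (f v (c v))`, using `exp x ≤ 1 + 2x` on `[0, 1]`. -/
lemma uniformProb_four_mul_le_sum {f : V → P → ℝ} {μ : ℝ} (hf0 : ∀ v p, 0 ≤ f v p)
    (hf1 : ∀ v p, f v p ≤ 1) (hμ : ∑ v, 𝔼 p, f v p ≤ μ) :
    uniformProb (fun c : V → P ↦ 4 * μ ≤ ∑ v, f v (c v)) ≤ Real.exp (-2 * μ) := by
  have hmarkov : Real.exp (4 * μ) * uniformProb (fun c : V → P ↦ 4 * μ ≤ ∑ v, f v (c v)) ≤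
      𝔼 c : V → P, ∏ v, Real.exp (f v (c v)) := by
    rw [uniformProb, mul_expect]
    refine expect_le_expect fun c _ ↦ ?_
    rw [← Real.exp_sum]
    split_ifs with hc
    · simpa using hc
    · simpa using (Real.exp_pos _).le
  have hfactor : ∀ v, 𝔼 p, Real.exp (f v p) ≤ Real.exp (2 * 𝔼 p, f v p) := fun v ↦ calc
    𝔼 p, Real.exp (f v p) ≤ 𝔼 p, (2 * f v p + 1) := expect_le_expect fun p _ ↦ by
      have hquad := (abs_le.1 <| Real.abs_exp_sub_one_sub_id_le (x := f v p)
        (by rw [abs_of_nonneg (hf0 v p)]; exact hf1 v p)).2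
      nlinarith [hf0 v p, hf1 v p]
    _ = 2 * 𝔼 p, f v p + 1 := by
      rw [expect_add_distrib, ← mul_expect, expect_const univ_nonempty]
    _ ≤ Real.exp (2 * 𝔼 p, f v p) := Real.add_one_le_exp _
  have hmgf : 𝔼 c : V → P, ∏ v, Real.exp (f v (c v)) ≤ Real.exp (2 * μ) := by
    rw [expect_prod_apply fun v p ↦ Real.exp (f v p)]
    refine (prod_le_prod (fun v _ ↦ expect_nonneg fun p _ ↦ (Real.exp_pos _).le)
      fun v _ ↦ hfactor v).trans ?_
    rw [← Real.exp_sum, Real.exp_le_exp, ← mul_sum]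
    linarith
  rw [← mul_le_mul_iff_right₀ (Real.exp_pos (4 * μ)), ← Real.exp_add]
  exact hmarkov.trans (hmgf.trans_eq (by ring_nf))

lemma uniformProb_forall_notMem_le (S : Finset V) (Y : Finset P) :
    uniformProb (fun c : V → P ↦ ∀ v ∈ S, c v ∉ Y) ≤
      Real.exp (-(#S * #Y / Fintype.card P)) := by
  classical
  have hprod : uniformProb (fun c : V → P ↦ ∀ v ∈ S, c v ∉ Y) =
      ∏ v, 𝔼 p, if v ∈ S ∧ p ∈ Y then (0 : ℝ) else 1 := by
    rw [← expect_prod_apply fun v p ↦ if v ∈ S ∧ p ∈ Y then (0 : ℝ) else 1, uniformProb]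
    refine expect_congr rfl fun c _ ↦ ?_
    split_ifs with hc
    · exact (prod_eq_one fun v _ ↦ if_neg fun h ↦ hc v h.1 h.2).symm
    · push Not at hc
      obtain ⟨v, hv⟩ := hc
      exact Eq.symm <| prod_eq_zero (mem_univ v) (if_pos hv)
  have hfactor : ∀ v, (𝔼 p, if v ∈ S ∧ p ∈ Y then (0 : ℝ) else 1) ≤
      Real.exp (if v ∈ S then -(#Y / Fintype.card P : ℝ) else 0) := by
    intro v
    by_cases hv : v ∈ S
    · have hY : (𝔼 p, if p ∈ Y then (0 : ℝ) else 1) = -(#Y / Fintype.card P : ℝ) + 1 := calc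
        _ = 𝔼 p, ((1 : ℝ) - if p ∈ Y then 1 else 0) :=
          expect_congr rfl fun p _ ↦ by split_ifs <;> norm_num
        _ = _ := by
          rw [expect_sub_distrib, expect_const univ_nonempty, Fintype.expect_eq_sum_div_card]
          rw [sum_boole, filter_univ_mem]
          ring
      simpa [hv, hY] using Real.add_one_le_exp (-(#Y / Fintype.card P : ℝ))
    · simp [hv]
  rw [hprod]
  refine (prod_le_prod (fun v _ ↦ expect_nonneg fun p _ ↦ by split_ifs <;> norm_num)
    fun v _ ↦ hfactor v).trans_eq ?_
  rw [← Real.exp_sum, sum_ite_mem, univ_inter, sum_const, nsmul_eq_mul]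
  ring_nf

end Concentration

end UniformProbability

namespace GraphTools

open Finset SimpleGraph

section MaxCut

variable {V : Type*} (G : SimpleGraph V) (side : V → Bool)

/-- The bipartite subgraph of `G` formed by the edges crossing the cut `side`. -/
def cutGraph : SimpleGraph V where
  Adj u v := G.Adj u v ∧ side u ≠ side v
  symm := ⟨fun _ _ h ↦ ⟨h.1.symm, h.2.symm⟩⟩
  loopless := ⟨fun _ h ↦ h.2 rfl⟩

variable {G side} in
lemma cutGraph_adj {u v : V} : (cutGraph G side).Adj u v ↔ G.Adj u v ∧ side u ≠ side v := Iff.rfl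

lemma cutGraph_le : cutGraph G side ≤ G := fun _ _ h ↦ h.1

variable [DecidableRel G.Adj]

instance : DecidableRel (cutGraph G side).Adj :=
  fun _ _ ↦ decidable_of_iff _ cutGraph_adj.symm

variable [Fintype V]

lemma cutGraph_degree_add_degree_update [DecidableEq V] (u : V) :
    (cutGraph G side).degree u + (cutGraph G (Function.update side u (!side u))).degree u =
      G.degree u := by
  have hflip : (cutGraph G (Function.update side u (!side u))).neighborFinset u =
      G.neighborFinset u \ (cutGraph G side).neighborFinset u := by
    ext v
    rcases eq_or_ne v u with rfl | hvu
    · simp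
    · simp only [mem_neighborFinset, mem_sdiff, cutGraph_adj, Function.update_self,
        Function.update_of_ne hvu]
      cases side u <;> cases side v <;> simp
  rw [← card_neighborFinset_eq_degree, ← card_neighborFinset_eq_degree, hflip, add_comm,
    card_sdiff_add_card_eq_card, card_neighborFinset_eq_degree]
  exact fun v ↦ by simpa using fun h ↦ cutGraph_le G side h

/-- In a maximum cut, moving `u` to the other side does not increase the number of cut edges. -/
theorem exists_cutGraph_degree_le :
    ∃ side : V → Bool, ∀ u, G.degree u ≤ 2 * (cutGraph G side).degree u := by
  classical
  obtain ⟨side, hmax⟩ := Finite.exists_max fun s : V → Bool ↦ #(cutGraph G s).edgeFinset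
  refine ⟨side, fun u ↦ ?_⟩
  let flipped := Function.update side u (!side u)
  have hrest : (cutGraph G flipped).deleteIncidenceSet u =
      (cutGraph G side).deleteIncidenceSet u := by
    ext v w
    simp only [deleteIncidenceSet_adj, cutGraph_adj, flipped]
    refine and_congr_left fun h ↦ ?_
    rw [Function.update_of_ne h.1, Function.update_of_ne h.2]
  have hcardEq : #((cutGraph G flipped).deleteIncidenceSet u).edgeFinset =
      #((cutGraph G side).deleteIncidenceSet u).edgeFinset := by congr!
  rw [card_edgeFinset_deleteIncidenceSet, card_edgeFinset_deleteIncidenceSet] at hcardEq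
  have hle := (cutGraph G flipped).degree_le_card_edgeFinset u
  have hle' := (cutGraph G side).degree_le_card_edgeFinset u
  have hedges : #(cutGraph G flipped).edgeFinset ≤ #(cutGraph G side).edgeFinset := hmax flipped
  have hdegree : (cutGraph G side).degree u + (cutGraph G flipped).degree u = G.degree u :=
    cutGraph_degree_add_degree_update G side u
  omega

end MaxCut

section LocalLemma

open UniformProbability

variable {V : Type*} [Fintype V] {B : SimpleGraph V}

open Classical in
/-- The vertices at distance at most `n` from `u`. -/
noncomputable def closedBall (B : SimpleGraph V) (n : ℕ) (u : V) : Finset V :=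
  {w | B.edist u w ≤ n}

lemma mem_closedBall {n : ℕ} {u w : V} : w ∈ closedBall B n u ↔ B.edist u w ≤ n := by
  simp [closedBall]

lemma closedBall_succ_subset [DecidableEq V] [DecidableRel B.Adj] (n : ℕ) (u : V) :
    closedBall B (n + 1) u ⊆ (insert u (B.neighborFinset u)).biUnion (closedBall B n) := by
  intro w hw
  have hdist := mem_closedBall.1 hw
  obtain ⟨p, hp⟩ := exists_walk_of_edist_ne_top (ne_top_of_le_ne_top (by simp) hdist)
  rw [← hp] at hdist
  simp only [mem_biUnion, mem_insert, mem_neighborFinset, exists_eq_or_imp, mem_closedBall]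
  cases p with
  | nil => simp
  | cons h p =>
    refine Or.inr ⟨_, h, (edist_le p).trans ?_⟩
    rw [Walk.length_cons] at hdist
    exact_mod_cast Nat.le_of_succ_le_succ (mod_cast hdist)

lemma card_closedBall_le [DecidableRel B.Adj] {d : ℕ} (hd : ∀ u, B.degree u ≤ d) (n : ℕ) (u : V) :
    #(closedBall B n u) ≤ (d + 1) ^ n := by
  classical
  induction n generalizing u with
  | zero => simp [closedBall, filter_eq]
  | succ n ih =>
    calc #(closedBall B (n + 1) u)
        ≤ #((insert u (B.neighborFinset u)).biUnion (closedBall B n)) :=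
          card_le_card (closedBall_succ_subset n u)
      _ ≤ #(insert u (B.neighborFinset u)) * (d + 1) ^ n :=
          card_biUnion_le_card_mul _ _ _ fun v _ ↦ ih v
      _ ≤ (d + 1) * (d + 1) ^ n := by
          gcongr
          exact (card_insert_le _ _).trans (Nat.succ_le_succ (hd u))
      _ = (d + 1) ^ (n + 1) := by ring

lemma mem_closedBall_of_not_disjoint {n : ℕ} {u v : V}
    (h : ¬ Disjoint (closedBall B n u) (closedBall B n v)) : v ∈ closedBall B (2 * n) u := by
  obtain ⟨w, hu, hv⟩ := not_disjoint_iff.1 h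
  rw [mem_closedBall] at *
  calc B.edist u v ≤ B.edist u w + B.edist w v := SimpleGraph.edist_triangle
    _ ≤ n + n := add_le_add hu (edist_comm (G := B) ▸ hv)
    _ = (2 * n : ℕ) := by push_cast; ring

theorem exists_forall_not_of_dependsOn_closedBall [DecidableEq V] [DecidableRel B.Adj]
    {P : Type*} [Fintype P] [Nonempty P] {E : V → (V → P) → Prop} {n d : ℕ} {p : ℝ}
    (hd : ∀ u, B.degree u ≤ d)
    (hE : ∀ u, DependsOn (E u) (closedBall B n u : Set V)) (hp : ∀ u, uniformProb (E u) ≤ p)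
    (hpd : 4 * p * (d + 1) ^ (2 * n) ≤ 1) : ∃ c, ∀ u, ¬ E u c := by
  refine lovasz_local_lemma (D := (d + 1) ^ (2 * n)) hE hp (fun u ↦ ?_) (by positivity)
    (by exact_mod_cast hpd)
  exact (card_le_card fun v hv ↦ mem_closedBall_of_not_disjoint (mem_filter.1 hv).2).trans
    (card_closedBall_le hd _ u)

end LocalLemma

end GraphTools

namespace OverlapColouring

open Finset SimpleGraph

section Overlap

variable {V X : Type*} [Fintype V] [DecidableEq V] [DecidableEq X] (B : SimpleGraph V)
  [DecidableRel B.Adj]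

/-- The number of common neighbours of two vertices. -/
def codegree (v w : V) : ℕ := #(B.neighborFinset v ∩ B.neighborFinset w)

/-- The number of paths of length two from `v` to another vertex of the same colour. -/
def overlap (c : V → X) (v : V) : ℕ :=
  ∑ a ∈ B.neighborFinset v, #{w ∈ B.neighborFinset a | w ≠ v ∧ c w = c v}

/-- The neighbours of `u` that themselves have at most `m` neighbours of colour `x`. -/
def lightNbrs (c : V → X) (m : ℕ) (u : V) (x : X) : Finset V :=
  {a ∈ B.neighborFinset u | #{w ∈ B.neighborFinset a | c w = x} ≤ m}

/-- The vertices of `S` whose colour lies in `Y` and whose overlap is at most `t`. -/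
def servers (c : V → X) (t : ℕ) (S : Finset V) (Y : Finset X) : Finset V :=
  {v ∈ S | c v ∈ Y ∧ overlap B c v ≤ t}

variable {B} {c : V → X} {d : ℕ}

lemma codegree_le (hd : ∀ v, B.degree v ≤ d) (v w : V) : codegree B v w ≤ d :=
  (card_le_card inter_subset_left).trans (hd v)

lemma sum_codegree_le (hd : ∀ v, B.degree v ≤ d) (v : V) : ∑ w, codegree B v w ≤ d * d := calc
  ∑ w, codegree B v w = ∑ w, #{a ∈ B.neighborFinset v | B.Adj a w} := by
    refine sum_congr rfl fun w _ ↦ congrArg card ?_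
    ext a
    simp [adj_comm]
  _ = ∑ a ∈ B.neighborFinset v, B.degree a := by
    refine (sum_card_bipartiteAbove_eq_sum_card_bipartiteBelow B.Adj).symm.trans
      (sum_congr rfl fun a _ ↦ ?_)
    rw [← card_neighborFinset_eq_degree, neighborFinset_eq_filter, bipartiteAbove]
  _ ≤ d * d := (sum_le_card_nsmul _ _ d fun a _ ↦ hd a).trans (Nat.mul_le_mul_right d (hd v))

lemma overlap_le_sum_codegree (v : V) :
    overlap B c v ≤ ∑ w with c w = c v, codegree B v w := calc
  overlap B c v ≤ ∑ a ∈ B.neighborFinset v, #{w ∈ {w | c w = c v} | B.Adj a w} := by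
    refine sum_le_sum fun a _ ↦ card_le_card fun w hw ↦ ?_
    simp_all
  _ = ∑ w with c w = c v, codegree B v w := by
    refine (sum_card_bipartiteAbove_eq_sum_card_bipartiteBelow B.Adj).trans
      (sum_congr rfl fun w _ ↦ congrArg card ?_)
    ext a
    simp [bipartiteBelow, adj_comm]

lemma mul_card_heavy_le_overlap (m : ℕ) (v : V) :
    m * #{a ∈ B.neighborFinset v | ¬ #{w ∈ B.neighborFinset a | c w = c v} ≤ m} ≤
      overlap B c v := by
  refine (mul_comm _ _).trans_le <| (card_nsmul_le_sum _ _ m fun a ha ↦ ?_).trans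
    (sum_le_sum_of_subset (filter_subset _ _))
  have hinsert : {w ∈ B.neighborFinset a | c w = c v} ⊆
      insert v {w ∈ B.neighborFinset a | w ≠ v ∧ c w = c v} := by grind
  have hcard := (card_le_card hinsert).trans (card_insert_le _ _)
  have hheavy := (mem_filter.1 ha).2
  lia

lemma le_four_mul_card_lightNbrs {L : ℕ} {v : V} (hL : 0 < L) (hv : overlap B c v ≤ L * d)
    (hdeg : d ≤ 2 * B.degree v) : d ≤ 4 * #(lightNbrs B c (4 * L) v (c v)) := by
  have hheavy := (mul_card_heavy_le_overlap (4 * L) v).trans hv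
  have hsplit := card_filter_add_card_filter_not (s := B.neighborFinset v)
    fun a ↦ #{w ∈ B.neighborFinset a | c w = c v} ≤ 4 * L
  rw [card_neighborFinset_eq_degree, ← lightNbrs] at hsplit
  rw [mul_comm 4 L, mul_assoc, mul_le_mul_iff_right₀ hL] at hheavy
  lia

section Representatives

variable {S : Finset V} {Y : Finset X} {rep : X → V} {t : ℕ}

lemma sum_overlap_rep_le (hd : ∀ v, B.degree v ≤ d) (S : Finset V) {T : Finset X} (hTY : T ⊆ Y)
    (hrep : ∀ p ∈ T, c (rep p) = p) :
    ∑ p ∈ T, overlap B c (rep p) ≤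
      d * #{v ∈ S | c v ∈ Y} + ∑ w ∈ Sᶜ with c w ∈ Y, codegree B (rep (c w)) w := calc
  ∑ p ∈ T, overlap B c (rep p) ≤ ∑ p ∈ T, ∑ w with c w = p, codegree B (rep (c w)) w := by
    refine sum_le_sum fun p hp ↦ (overlap_le_sum_codegree _).trans_eq ?_
    rw [hrep p hp]
    exact sum_congr rfl fun w hw ↦ by rw [(mem_filter.1 hw).2]
  _ = ∑ w with c w ∈ T, codegree B (rep (c w)) w := by
    rw [← sum_fiberwise_of_maps_to (s := {w | c w ∈ T}) (t := T) (g := c) (by simp)]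
    refine sum_congr rfl fun p hp ↦ sum_congr ?_ fun _ _ ↦ rfl
    grind
  _ ≤ ∑ w with c w ∈ Y, codegree B (rep (c w)) w :=
    sum_le_sum_of_subset fun w hw ↦ by simp_all [hTY (mem_filter.1 hw).2]
  _ = ∑ w ∈ S with c w ∈ Y, codegree B (rep (c w)) w +
      ∑ w ∈ Sᶜ with c w ∈ Y, codegree B (rep (c w)) w := by
    simp only [sum_filter, sum_add_sum_compl]
  _ ≤ d * #{v ∈ S | c v ∈ Y} + ∑ w ∈ Sᶜ with c w ∈ Y, codegree B (rep (c w)) w := by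
    gcongr
    exact (sum_le_card_nsmul _ _ d fun w _ ↦ codegree_le hd _ w).trans_eq (mul_comm _ _)

lemma card_mul_le_sum_overlap_rep (hrep : ∀ p ∈ Y ∩ S.image c, rep p ∈ S ∧ c (rep p) = p)
    (hcover : #Y < 2 * #(Y ∩ S.image c)) (hfew : 4 * #((servers B c t S Y).image c) < #Y) :
    #Y * t ≤ 4 * ∑ p ∈ Y ∩ S.image c, overlap B c (rep p) := by
  set T := Y ∩ S.image c
  have hgood : #{p ∈ T | overlap B c (rep p) ≤ t} ≤ #((servers B c t S Y).image c) := by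
    refine card_le_card fun p hp ↦ ?_
    obtain ⟨hpT, ht⟩ := mem_filter.1 hp
    obtain ⟨hS, hc⟩ := hrep p hpT
    exact mem_image.2 ⟨rep p, mem_filter.2 ⟨hS, hc.symm ▸ (mem_inter.1 hpT).1, ht⟩, hc⟩
  have hsplit := card_filter_add_card_filter_not (s := T) fun p ↦ overlap B c (rep p) ≤ t
  have hbad : #{p ∈ T | ¬ overlap B c (rep p) ≤ t} * t ≤ ∑ p ∈ T, overlap B c (rep p) :=
    (card_nsmul_le_sum _ _ t fun p hp ↦ (not_le.1 (mem_filter.1 hp).2).le).trans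
      (sum_le_sum_of_subset (filter_subset _ _))
  calc #Y * t ≤ 4 * #{p ∈ T | ¬ overlap B c (rep p) ≤ t} * t := by gcongr; lia
    _ ≤ 4 * ∑ p ∈ T, overlap B c (rep p) := by rw [mul_assoc]; gcongr

end Representatives

end Overlap

open UniformProbability
open scoped BigOperators

section Tail

variable {V P : Type*} [Fintype V] [DecidableEq V] [Fintype P] [Nonempty P] [DecidableEq P]
  {B : SimpleGraph V} [DecidableRel B.Adj] {S : Finset V} {Y : Finset P} {d : ℕ} {μ : ℝ}

lemma uniformProb_two_mul_card_inter_image_le (hSP : 4 * Fintype.card P ≤ #S) :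
    uniformProb (fun c : V → P ↦ 2 * #(Y ∩ S.image c) ≤ #Y) ≤ Real.exp (-#Y) := by
  have hP : (0 : ℝ) < Fintype.card P := mod_cast Fintype.card_pos
  have hSPR : 4 * (Fintype.card P : ℝ) ≤ #S := mod_cast hSP
  let large := {Y' ∈ Y.powerset | #Y ≤ 2 * #Y'}
  have hlarge : (#large : ℝ) ≤ Real.exp #Y := calc
    (#large : ℝ) ≤ 2 ^ #Y := mod_cast (card_filter_le _ _).trans_eq (card_powerset Y)
    _ ≤ Real.exp 1 ^ #Y := by gcongr; linarith [Real.add_one_le_exp 1]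
    _ = Real.exp #Y := by rw [← Real.exp_nat_mul, mul_one]
  have havoid : ∀ Y' ∈ large,
      uniformProb (fun c : V → P ↦ ∀ v ∈ S, c v ∉ Y') ≤ Real.exp (-(2 * #Y)) := by
    intro Y' hY'
    have hcard : (#Y : ℝ) ≤ 2 * #Y' := mod_cast (mem_filter.1 hY').2
    refine (uniformProb_forall_notMem_le S Y').trans ?_
    rw [Real.exp_le_exp, neg_le_neg_iff, le_div_iff₀ hP]
    nlinarith
  calc uniformProb (fun c : V → P ↦ 2 * #(Y ∩ S.image c) ≤ #Y)
      ≤ uniformProb (fun c : V → P ↦ ∃ Y' ∈ large, ∀ v ∈ S, c v ∉ Y') := by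
        refine uniformProb_mono fun c hc ↦ ⟨Y \ S.image c, ?_, fun v hv hvY ↦
          (mem_sdiff.1 hvY).2 (mem_image_of_mem c hv)⟩
        have := card_sdiff_add_card_inter Y (S.image c)
        exact mem_filter.2 ⟨mem_powerset.2 sdiff_subset, by lia⟩
    _ ≤ ∑ Y' ∈ large, Real.exp (-(2 * #Y)) :=
        (uniformProb_exists_le _ _).trans (sum_le_sum havoid)
    _ ≤ Real.exp #Y * Real.exp (-(2 * #Y)) := by
        rw [sum_const, nsmul_eq_mul]
        gcongr
    _ = Real.exp (-#Y) := by rw [← Real.exp_add]; ring_nf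

lemma uniformProb_le_card_filter_mem (hμ : #S * #Y ≤ μ * Fintype.card P) :
    uniformProb (fun c : V → P ↦ 4 * μ ≤ #{v ∈ S | c v ∈ Y}) ≤ Real.exp (-2 * μ) := by
  have hP : (0 : ℝ) < Fintype.card P := mod_cast Fintype.card_pos
  have hcount : ∀ c : V → P,
      (#{v ∈ S | c v ∈ Y} : ℝ) = ∑ v, if v ∈ S ∧ c v ∈ Y then (1 : ℝ) else 0 := fun c ↦ by
    rw [sum_boole, ← filter_filter, filter_mem_eq_inter, univ_inter]
  simp only [hcount]
  refine uniformProb_four_mul_le_sum (f := fun v p ↦ if v ∈ S ∧ p ∈ Y then (1 : ℝ) else 0)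
    (fun v p ↦ by positivity) (fun v p ↦ by split_ifs <;> norm_num) ?_
  simp only [Fintype.expect_eq_sum_div_card, ← sum_div]
  rw [div_le_iff₀ hP]
  refine hμ.trans_eq' ?_
  simp [ite_and, sum_ite_mem]

lemma uniformProb_le_sum_codegree (hd0 : 0 < d) (hd : ∀ v, B.degree v ≤ d)
    (hμ : d * #Y ≤ μ * Fintype.card P) (rep : P → V) :
    uniformProb (fun c : V → P ↦ d * (4 * μ) ≤
      ((∑ w with c w ∈ Y, codegree B (rep (c w)) w : ℕ) : ℝ)) ≤ Real.exp (-2 * μ) := by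
  have hP : (0 : ℝ) < Fintype.card P := mod_cast Fintype.card_pos
  have hdR : (0 : ℝ) < d := mod_cast hd0
  let f : V → P → ℝ := fun w p ↦ if p ∈ Y then codegree B (rep p) w / d else 0
  have hsum : ∀ c : V → P, ((∑ w with c w ∈ Y, codegree B (rep (c w)) w : ℕ) : ℝ) =
      d * ∑ w, f w (c w) := fun c ↦ by
    simp only [f, sum_filter, mul_sum, Nat.cast_sum, mul_ite, mul_div_cancel₀ _ hdR.ne',
      Nat.cast_ite, mul_zero, Nat.cast_zero]
  simp only [hsum, mul_le_mul_iff_right₀ hdR]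
  refine uniformProb_four_mul_le_sum (fun w p ↦ by positivity) (fun w p ↦ ?_) ?_
  · have := codegree_le hd (rep p) w
    simp only [f]
    split_ifs
    · rw [div_le_one hdR]
      exact_mod_cast this
    · norm_num
  · simp only [Fintype.expect_eq_sum_div_card, ← sum_div]
    rw [div_le_iff₀ hP, sum_comm]
    refine le_trans ?_ hμ
    calc ∑ p, ∑ w, f w p = ∑ p ∈ Y, (∑ w, codegree B (rep p) w : ℕ) / (d : ℝ) := by
          rw [← sum_subset (subset_univ Y) fun p _ hp ↦ by simp [f, hp]]
          exact sum_congr rfl fun p hp ↦ by simp [f, hp, sum_div]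
      _ ≤ ∑ _p ∈ Y, (d : ℝ) := sum_le_sum fun p _ ↦ by
          rw [div_le_iff₀ hdR]
          exact_mod_cast sum_codegree_le hd (rep p)
      _ = d * #Y := by rw [sum_const, nsmul_eq_mul, mul_comm]

/-- Once the colours on `S` are exposed, one representative per colour is fixed, and their total
overlap is governed by the independent colours outside `S`. -/
lemma uniformProb_few_servers_of_typical_le {L : ℕ} (hd0 : 0 < d) (hd : ∀ v, B.degree v ≤ d)
    (hμ : d * #Y ≤ μ * Fintype.card P) (hμL : 32 * μ ≤ #Y * L) :
    uniformProb (fun c : V → P ↦ 4 * #((servers B c (L * d) S Y).image c) < #Y ∧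
      #Y < 2 * #(Y ∩ S.image c) ∧ #{v ∈ S | c v ∈ Y} < 4 * μ) ≤ Real.exp (-2 * μ) := by
  refine uniformProb_le_of_resample (I := Sᶜ) fun c₀ ↦ ?_
  rcases isEmpty_or_nonempty V with _ | _
  · refine (uniformProb_mono (F := fun _ ↦ False) ?_).trans ?_
    · rintro c ⟨-, hcover, -⟩
      simp [S.eq_empty_of_isEmpty] at hcover
    · simpa [uniformProb] using (Real.exp_pos _).le
  refine (uniformProb_mono fun c₁ ↦ ?_).trans
    (uniformProb_le_sum_codegree hd0 hd hμ (Function.invFunOn c₀ S))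
  set rep := Function.invFunOn c₀ S
  set c := Sᶜ.piecewise c₁ c₀
  rintro ⟨hfew, hcover, htypical⟩
  have hrep : ∀ p ∈ Y ∩ S.image c, rep p ∈ S ∧ c (rep p) = p := by
    intro p hp
    obtain ⟨v, hv, rfl⟩ := mem_image.1 (mem_inter.1 hp).2
    have hpre : ∃ a ∈ (S : Set V), c₀ a = c v := ⟨v, hv, by simp [c, hv]⟩
    have hmem : rep (c v) ∈ S := Function.invFunOn_mem hpre
    exact ⟨hmem, by simpa [c, hmem] using Function.invFunOn_eq hpre⟩
  have hoverlap := (card_mul_le_sum_overlap_rep hrep hcover hfew).trans <| Nat.mul_le_mul_left 4 <|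
    sum_overlap_rep_le hd S inter_subset_left fun p hp ↦ (hrep p hp).2
  have hresampled : ∑ w ∈ Sᶜ with c w ∈ Y, codegree B (rep (c w)) w ≤
      ∑ w with c₁ w ∈ Y, codegree B (rep (c₁ w)) w := by
    have hc : ∀ w ∈ Sᶜ, c w = c₁ w := fun w hw ↦ piecewise_eq_of_mem _ _ _ hw
    calc ∑ w ∈ Sᶜ with c w ∈ Y, codegree B (rep (c w)) w
        = ∑ w ∈ Sᶜ with c₁ w ∈ Y, codegree B (rep (c₁ w)) w := by
          rw [sum_filter, sum_filter]
          exact sum_congr rfl fun w hw ↦ by rw [hc w hw]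
      _ ≤ _ := sum_le_sum_of_subset (filter_subset_filter _ (subset_univ _))
  have hbound : ((#Y : ℝ) * (L * d)) ≤ 4 * (d * #{v ∈ S | c v ∈ Y} +
      (∑ w with c₁ w ∈ Y, codegree B (rep (c₁ w)) w : ℕ)) := by
    exact_mod_cast hoverlap.trans (by gcongr)
  have hdR : (0 : ℝ) < d := mod_cast hd0
  linarith [mul_lt_mul_of_pos_left htypical hdR, mul_le_mul_of_nonneg_right hμL hdR.le]

theorem uniformProb_few_servers_le {L : ℕ} (hd : ∀ v, B.degree v ≤ d) (hS : d ≤ 4 * #S)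
    (hSd : #S ≤ d) (hP : 16 * Fintype.card P ≤ d) (hL : 32 * d ≤ L * Fintype.card P) :
    uniformProb (fun c : V → P ↦ 4 * #((servers B c (L * d) S Y).image c) < #Y) ≤
      3 * Real.exp (-#Y) := by
  have hP0 : 0 < Fintype.card P := Fintype.card_pos
  have hP0R : (0 : ℝ) < Fintype.card P := mod_cast hP0
  let μ : ℝ := d * #Y / Fintype.card P
  have hμ : d * #Y = μ * Fintype.card P := (div_mul_cancel₀ _ hP0R.ne').symm
  have hYμ : (#Y : ℝ) ≤ μ := by
    rw [le_div_iff₀ hP0R, mul_comm]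
    gcongr
    lia
  have hμL : 32 * μ ≤ #Y * L := by
    rw [mul_div_assoc', div_le_iff₀ hP0R]
    have : (32 : ℝ) * d ≤ L * Fintype.card P := mod_cast hL
    nlinarith [(Nat.cast_nonneg #Y : (0 : ℝ) ≤ #Y)]
  have hexp : Real.exp (-2 * μ) ≤ Real.exp (-#Y) := by
    rw [Real.exp_le_exp]
    linarith [(Nat.cast_nonneg #Y : (0 : ℝ) ≤ #Y)]
  have hmiss := uniformProb_two_mul_card_inter_image_le (Y := Y) (by lia : 4 * Fintype.card P ≤ #S)
  have hmany := uniformProb_le_card_filter_mem (S := S) (Y := Y) (μ := μ)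
    (hμ ▸ mod_cast Nat.mul_le_mul_right #Y hSd)
  have htypical := uniformProb_few_servers_of_typical_le (S := S) (by lia) hd hμ.le hμL
  refine (uniformProb_mono fun c hfew ↦ ?_).trans <| (uniformProb_or_le.trans <|
    add_le_add hmiss (uniformProb_or_le.trans (add_le_add hmany htypical))).trans (by linarith)
  by_cases hcover : 2 * #(Y ∩ S.image c) ≤ #Y
  · exact Or.inl hcover
  by_cases hcount : 4 * μ ≤ #{v ∈ S | c v ∈ Y}
  · exact Or.inr (Or.inl hcount)
  · exact Or.inr (Or.inr ⟨hfew, not_le.1 hcover, not_le.1 hcount⟩)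

end Tail

open GraphTools

section Congr

variable {V X : Type*} [Fintype V] [DecidableEq X] {B : SimpleGraph V} [DecidableRel B.Adj]
  {c c' : V → X} {u : V}

lemma adj_of_mem_lightNbrs {m : ℕ} {v : V} {x : X} (h : v ∈ lightNbrs B c m u x) : B.Adj u v :=
  (mem_neighborFinset _ _ _).1 (mem_filter.1 h).1

lemma lightNbrs_congr (m : ℕ) (x : X) (h : ∀ v, B.Adj u v → ∀ w, B.Adj v w → c w = c' w) :
    lightNbrs B c m u x = lightNbrs B c' m u x := by
  refine filter_congr fun v hv ↦ iff_of_eq (congrArg (#· ≤ m) (filter_congr fun w hw ↦ ?_))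
  rw [mem_neighborFinset] at hv hw
  rw [h v hv w hw]

variable [DecidableEq V]

lemma overlap_congr {v : V} (hv : c v = c' v)
    (h : ∀ a, B.Adj v a → ∀ w, B.Adj a w → c w = c' w) : overlap B c v = overlap B c' v := by
  refine sum_congr rfl fun a ha ↦ congrArg card (filter_congr fun w hw ↦ ?_)
  rw [mem_neighborFinset] at ha hw
  rw [hv, h a ha w hw]

lemma servers_image_congr {S : Finset V} (t : ℕ) (Y : Finset X) (hS : ∀ v ∈ S, c v = c' v)
    (h : ∀ v ∈ S, ∀ a, B.Adj v a → ∀ w, B.Adj a w → c w = c' w) :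
    (servers B c t S Y).image c = (servers B c' t S Y).image c' := by
  have hservers : servers B c t S Y = servers B c' t S Y :=
    filter_congr fun v hv ↦ by rw [hS v hv, overlap_congr (hS v hv) (h v hv)]
  rw [hservers]
  exact image_congr fun v hv ↦ hS v (mem_filter.1 hv).1

end Congr

section LocalLemma

variable {V P X : Type*} [Fintype V] [DecidableEq V] [DecidableEq P] [DecidableEq X]
  (B : SimpleGraph V) [DecidableRel B.Adj] (e : P → X) (Y : V → X → Finset P) (d L : ℕ)

/-- The bad event at `u` for the local lemma: for some colour `x`, many neighbours of `u` are light
for `x`, but those of them that are servers show few of the colours in `Y u x`. -/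
def IsDeprived (c : V → P) (u : V) : Prop :=
  ∃ x, d ≤ 4 * #(lightNbrs B (e ∘ c) (4 * L) u x) ∧
    4 * #((servers B c (L * d) (lightNbrs B (e ∘ c) (4 * L) u x) (Y u x)).image c) < #(Y u x)

variable {B e Y d L}

lemma dependsOn_isDeprived (u : V) :
    DependsOn (fun c ↦ IsDeprived B e Y d L c u) (closedBall B 3 u : Set V) := by
  intro c c' h
  have hball : ∀ {w} (p : B.Walk u w), p.length ≤ 3 → c w = c' w := fun p hp ↦
    h _ (mem_closedBall.2 ((edist_le p).trans (mod_cast hp)))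
  refine propext (exists_congr fun x ↦ ?_)
  rw [lightNbrs_congr (c := e ∘ c) (c' := e ∘ c') _ x fun v hv w hw ↦
    congrArg e (hball (.cons hv (.cons hw .nil)) (by simp)), servers_image_congr]
  · exact fun v hv ↦ hball (.cons (adj_of_mem_lightNbrs hv) .nil) (by simp)
  · exact fun v hv a ha w hw ↦
      hball (.cons (adj_of_mem_lightNbrs hv) (.cons ha (.cons hw .nil))) (by simp)

variable [Fintype P] [Nonempty P] [Fintype X]

/-- The light neighbours of `u` are determined by the colours on the side of `u`, whereas their own
colours and overlaps only involve the other side. -/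
lemma uniformProb_isDeprived_le (side : B.Coloring Bool) {k : ℕ} (hd : ∀ v, B.degree v ≤ d)
    (hY : ∀ u x, #(Y u x) = k) (hP : 16 * Fintype.card P ≤ d)
    (hL : 32 * d ≤ L * Fintype.card P) (u : V) :
    uniformProb (fun c ↦ IsDeprived B e Y d L c u) ≤ Fintype.card X * (3 * Real.exp (-k)) := by
  refine uniformProb_le_of_resample (I := {v | side v ≠ side u}) fun c₀ ↦ ?_
  set I : Finset V := {v | side v ≠ side u}
  let rich : Finset X := {x | d ≤ 4 * #(lightNbrs B (e ∘ c₀) (4 * L) u x)}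
  have hflip : ∀ {v w}, B.Adj v w → side w = !side v := fun h ↦
    Bool.eq_not_of_ne (side.valid h).symm
  have hnear : ∀ {v w} c₁, B.Adj u v → B.Adj v w → I.piecewise c₁ c₀ w = c₀ w :=
    fun c₁ hv hw ↦ piecewise_eq_of_notMem _ _ _ (by simp [I, hflip hv, hflip hw])
  have hfar : ∀ {v} c₁, side v = !side u → I.piecewise c₁ c₀ v = c₁ v :=
    fun c₁ hv ↦ piecewise_eq_of_mem _ _ _ (by simp [I, hv])
  have hfew : ∀ c₁, IsDeprived B e Y d L (I.piecewise c₁ c₀) u → ∃ x ∈ rich,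
      4 * #((servers B c₁ (L * d) (lightNbrs B (e ∘ c₀) (4 * L) u x) (Y u x)).image c₁) <
        #(Y u x) := by
    rintro c₁ ⟨x, hlight, hfew⟩
    rw [lightNbrs_congr (c := e ∘ I.piecewise c₁ c₀) (c' := e ∘ c₀) _ x
      fun v hv w hw ↦ congrArg e (hnear c₁ hv hw)] at hlight hfew
    rw [servers_image_congr (c' := c₁) _ _
      (fun v hv ↦ hfar c₁ (hflip (adj_of_mem_lightNbrs hv)))
      (fun v hv a ha w hw ↦ hfar c₁ (by
        rw [hflip hw, hflip ha, hflip (adj_of_mem_lightNbrs hv), Bool.not_not]))] at hfew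
    exact ⟨x, mem_filter.2 ⟨mem_univ x, hlight⟩, hfew⟩
  calc _ ≤ ∑ x ∈ rich, 3 * Real.exp (-#(Y u x)) :=
        ((uniformProb_mono hfew).trans (uniformProb_exists_le _ _)).trans <|
          sum_le_sum fun x hx ↦ uniformProb_few_servers_le hd (mem_filter.1 hx).2
            ((card_filter_le _ _).trans (hd u)) hP hL
    _ = #rich * (3 * Real.exp (-k)) := by simp only [hY, sum_const, nsmul_eq_mul]
    _ ≤ Fintype.card X * (3 * Real.exp (-k)) := by
        gcongr
        exact card_le_univ rich

theorem exists_forall_not_isDeprived (side : B.Coloring Bool) {k : ℕ}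
    (hd : ∀ v, B.degree v ≤ d) (hY : ∀ u x, #(Y u x) = k) (hP : 16 * Fintype.card P ≤ d)
    (hL : 32 * d ≤ L * Fintype.card P)
    (hk : 12 * Fintype.card X * (d + 1) ^ 6 * Real.exp (-k) ≤ 1) :
    ∃ c : V → P, ∀ u, ¬ IsDeprived B e Y d L c u :=
  exists_forall_not_of_dependsOn_closedBall hd dependsOn_isDeprived
    (uniformProb_isDeprived_le side hd hY hP hL) (hk.trans_eq' (by ring))

end LocalLemma

end OverlapColouring

namespace ColourSelection

open Finset SimpleGraph

/-- Colours `X` with a symmetric relation `Rel` without 4-cycles, to be imposed along the edges of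
the subgraph. A client of colour `x` on side `σ` of the graph may pick its servers among the
vertices whose colour is `embed p` for some `p ∈ targets σ x`, a set of `k` palette colours.
As `orient` is symmetric, a pair of colours determines the side of the client. -/
structure ColourScheme (P X : Type*) (k : ℕ) where
  embed : P ↪ X
  Rel : X → X → Prop
  orient : X → X → Bool
  targets : Bool → X → Finset P
  rel_symm : ∀ {x y}, Rel x y → Rel y x
  orient_comm : ∀ x y, orient x y = orient y x
  eq_or_eq_of_rel : ∀ {x x' y y'}, Rel x y → Rel x y' → Rel x' y → Rel x' y' → x = x' ∨ y = y'
  card_targets : ∀ σ x, #(targets σ x) = k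
  rel_of_mem_targets : ∀ {σ x p}, p ∈ targets σ x → Rel x (embed p)
  orient_of_mem_targets : ∀ {σ x p}, p ∈ targets σ x → orient x (embed p) = σ

section Affine

variable {q k : ℕ}

/-- The palette of `affineScheme`: the points of the plane over `ZMod q` whose first coordinate is
less than `2 * k`, that coordinate being split into its half and its parity. -/
abbrev AffinePalette (q k : ℕ) : Type := Fin k × Bool × ZMod q

/-- The palette colour with first coordinate `Nat.bit b j` that is related to `x`. -/
def affineTarget (b : Bool) (x : ZMod q × ZMod q) : Fin k ↪ AffinePalette q k where
  toFun j := (j, b, x.1 * (Nat.bit b j : ℕ) - x.2)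
  inj' _ _ h := congrArg Prod.fst h

lemma bit_lt_of_two_mul_le (hkq : 2 * k ≤ q) (b : Bool) (j : Fin k) : Nat.bit b j < q := by
  cases b <;> simp only [Nat.bit_false, Nat.bit_true] <;> lia

lemma val_bit (hkq : 2 * k ≤ q) (b : Bool) (j : Fin k) :
    ((Nat.bit b j : ℕ) : ZMod q).val = Nat.bit b j :=
  ZMod.val_natCast_of_lt (bit_lt_of_two_mul_le hkq b j)

/-- The inclusion of the palette into the plane. -/
def affineEmbed (hkq : 2 * k ≤ q) : AffinePalette q k ↪ ZMod q × ZMod q where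
  toFun p := ((Nat.bit p.2.1 p.1 : ℕ), p.2.2)
  inj' := by
    rintro ⟨j, b, y⟩ ⟨j', b', y'⟩ h
    obtain ⟨hbit, hy⟩ := Prod.ext_iff.1 h
    have hbit' := congrArg ZMod.val hbit
    simp only [val_bit hkq] at hbit'
    have hb := congrArg Nat.bodd hbit'
    have hj := congrArg Nat.div2 hbit'
    simp only [Nat.bodd_bit, Nat.div2_bit] at hb hj
    exact Prod.ext (Fin.ext hj) (Prod.ext hb hy)

/-- The scheme on the affine plane over `ZMod q` in which `(a, b)` and `(a', b')` are related when
`b + b' = a * a'`, oriented by the parity of `a + a'`. -/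
def affineScheme [Fact q.Prime] (hkq : 2 * k ≤ q) :
    ColourScheme (AffinePalette q k) (ZMod q × ZMod q) k where
  embed := affineEmbed hkq
  Rel x y := x.2 + y.2 = x.1 * y.1
  orient x y := (x.1.val + y.1.val).bodd
  targets σ x := univ.map (affineTarget (x.1.val.bodd ^^ σ) x)
  rel_symm h := by rw [add_comm, h, mul_comm]
  orient_comm x y := by rw [add_comm]
  eq_or_eq_of_rel {x x' y y'} hxy hxy' hx'y hx'y' := by
    have hdiff : (x.1 - x'.1) * (y.1 - y'.1) = 0 := by
      linear_combination -hxy + hxy' + hx'y - hx'y'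
    refine (mul_eq_zero.1 hdiff).imp (fun h ↦ ?_) fun h ↦ ?_
    · exact Prod.ext (sub_eq_zero.1 h) (by linear_combination hxy - hx'y + y.1 * h)
    · exact Prod.ext (sub_eq_zero.1 h) (by linear_combination hxy - hxy' + x.1 * h)
  card_targets σ x := by simp
  rel_of_mem_targets {σ x p} hp := by
    obtain ⟨j, -, rfl⟩ := mem_map.1 hp
    exact add_sub_cancel _ _
  orient_of_mem_targets {σ x p} hp := by
    obtain ⟨j, -, rfl⟩ := mem_map.1 hp
    change (x.1.val + ((Nat.bit (x.1.val.bodd ^^ σ) j : ℕ) : ZMod q).val).bodd = σ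
    simp [val_bit hkq]

end Affine

open OverlapColouring

section Allowed

variable {V P X : Type*} [Fintype V] [DecidableEq X] {B : SimpleGraph V} [DecidableRel B.Adj]
  {e : P ↪ X} {c : V → P} {d L : ℕ} {u v : V} {x : X}

lemma overlap_embed [DecidableEq V] [DecidableEq P] : overlap B (e ∘ c) v = overlap B c v := by
  simp [overlap]

variable [Fintype P] [Fintype X]

variable (e) in
/-- The colours outside the palette. -/
def spareColours : Finset X := (univ.map e)ᶜ

lemma card_spareColours : #(spareColours e) = Fintype.card X - Fintype.card P := by
  rw [spareColours, card_compl, card_map, card_univ]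

lemma lightNbrs_of_mem_spareColours (m : ℕ) (hspare : x ∈ spareColours e) :
    lightNbrs B (e ∘ c) m u x = B.neighborFinset u := by
  refine filter_true_of_mem fun a _ ↦ (card_eq_zero.2 ?_).trans_le (Nat.zero_le m)
  refine filter_eq_empty_iff.2 fun w _ hw ↦ ?_
  simp [← hw, spareColours] at hspare

variable [DecidableEq V] [DecidableEq P]

variable (B e c d L) in
/-- The final colours available to `u` when `c` is the random colouring: a vertex of small overlap
keeps its colour, any other one must take a spare colour. -/
def allowedColours (u : V) : Finset X :=
  if overlap B c u ≤ L * d then {e (c u)} else spareColours e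

lemma eq_embed_of_mem_allowedColours (hu : overlap B c u ≤ L * d)
    (hx : x ∈ allowedColours B e c d L u) : x = e (c u) := by
  rwa [allowedColours, if_pos hu, mem_singleton] at hx

lemma allowedColours_eq_of_mem_spareColours (hx : x ∈ allowedColours B e c d L u)
    (hspare : x ∈ spareColours e) : allowedColours B e c d L u = spareColours e := by
  refine if_neg fun hu ↦ ?_
  simp [eq_embed_of_mem_allowedColours hu hx, spareColours] at hspare

lemma eq_embed_of_notMem_spareColours (hx : x ∈ allowedColours B e c d L u)
    (hspare : x ∉ spareColours e) : x = e (c u) := by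
  refine eq_embed_of_mem_allowedColours (B := B) (d := d) (L := L) (not_not.1 fun hu ↦ hspare ?_) hx
  rwa [allowedColours, if_neg hu] at hx

lemma nonempty_allowedColours (hX : Fintype.card P < Fintype.card X) (u : V) :
    (allowedColours B e c d L u).Nonempty := by
  unfold allowedColours
  split_ifs
  · exact singleton_nonempty _
  · rw [← card_pos, card_spareColours]
    exact Nat.sub_pos_of_lt hX

lemma le_four_mul_card_lightNbrs_of_mem_allowedColours (hL : 0 < L) (hdeg : d ≤ 2 * B.degree u)
    (hx : x ∈ allowedColours B e c d L u) :
    d ≤ 4 * #(lightNbrs B (e ∘ c) (4 * L) u x) := by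
  by_cases hu : overlap B c u ≤ L * d
  · obtain rfl := eq_embed_of_mem_allowedColours hu hx
    exact le_four_mul_card_lightNbrs hL (overlap_embed.trans_le hu) hdeg
  · rw [allowedColours, if_neg hu] at hx
    rw [lightNbrs_of_mem_spareColours _ hx, card_neighborFinset_eq_degree]
    lia

lemma sum_inv_card_allowedColours_le_of_mem_spareColours (hd : ∀ v, B.degree v ≤ d)
    (hX : d + Fintype.card P ≤ Fintype.card X) (hspare : x ∈ spareColours e) (m : ℕ) :
    ∑ u with x ∈ allowedColours B e c d L u ∧ v ∈ lightNbrs B (e ∘ c) m u x,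
      (#(allowedColours B e c d L u) : ℚ)⁻¹ ≤ 1 := by
  set clients : Finset V :=
    {u | x ∈ allowedColours B e c d L u ∧ v ∈ lightNbrs B (e ∘ c) m u x}
  have hclients_le : #clients ≤ #(spareColours e) := calc
    #clients ≤ B.degree v := card_le_card fun u hu ↦
      (mem_neighborFinset _ _ _).2 (adj_of_mem_lightNbrs (mem_filter.1 hu).2.2).symm
    _ ≤ d := hd v
    _ ≤ #(spareColours e) := by rw [card_spareColours]; lia
  calc ∑ u ∈ clients, (#(allowedColours B e c d L u) : ℚ)⁻¹
      = ∑ _u ∈ clients, (#(spareColours e) : ℚ)⁻¹ := sum_congr rfl fun _ hu ↦ by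
        rw [allowedColours_eq_of_mem_spareColours (mem_filter.1 hu).2.1 hspare]
    _ = #clients / #(spareColours e) := by rw [sum_const, nsmul_eq_mul, div_eq_mul_inv]
    _ ≤ 1 := div_le_one_of_le₀ (mod_cast hclients_le) (Nat.cast_nonneg _)

lemma sum_inv_card_allowedColours_le_of_notMem_spareColours (hspare : x ∉ spareColours e) (m : ℕ) :
    ∑ u with x ∈ allowedColours B e c d L u ∧ v ∈ lightNbrs B (e ∘ c) m u x,
      (#(allowedColours B e c d L u) : ℚ)⁻¹ ≤ m := by
  set clients : Finset V :=
    {u | x ∈ allowedColours B e c d L u ∧ v ∈ lightNbrs B (e ∘ c) m u x}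
  have hclients_le : #clients ≤ m := by
    obtain hempty | ⟨u, hu⟩ := clients.eq_empty_or_nonempty
    · simp [hempty]
    refine (card_le_card fun w hw ↦ ?_).trans (mem_filter.1 (mem_filter.1 hu).2.2).2
    obtain ⟨-, hx, hv⟩ := mem_filter.1 hw
    rw [mem_filter, mem_neighborFinset]
    exact ⟨(adj_of_mem_lightNbrs hv).symm, (eq_embed_of_notMem_spareColours hx hspare).symm⟩
  refine (sum_le_card_nsmul _ _ 1 fun u _ ↦ Nat.cast_inv_le_one _).trans ?_
  simpa using hclients_le

lemma sum_inv_card_allowedColours_le (hL : 0 < L) (hd : ∀ v, B.degree v ≤ d)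
    (hX : d + Fintype.card P ≤ Fintype.card X) (x : X) (v : V) :
    ∑ u with x ∈ allowedColours B e c d L u ∧ v ∈ lightNbrs B (e ∘ c) (4 * L) u x,
      (#(allowedColours B e c d L u) : ℚ)⁻¹ ≤ (4 * L : ℕ) := by
  by_cases hspare : x ∈ spareColours e
  · exact (sum_inv_card_allowedColours_le_of_mem_spareColours hd hX hspare _).trans
      (mod_cast (by lia))
  · exact sum_inv_card_allowedColours_le_of_notMem_spareColours hspare _

end Allowed

section Selection

variable {V P X : Type*} {k r : ℕ}

/-- A colouring `col` and, for each client `u`, a set `S u` of `r` servers, chosen so that the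
graph of all client-server pairs has no 4-cycle. -/
structure IsClientSelection (𝒞 : ColourScheme P X k) (B : SimpleGraph V) (side : V → Bool)
    (col : V → X) (S : V → Finset V) (r : ℕ) : Prop where
  adj : ∀ {u v}, v ∈ S u → B.Adj u v
  card_eq : ∀ u, #(S u) = r
  exists_target : ∀ {u v}, v ∈ S u → ∃ p ∈ 𝒞.targets (side u) (col u), col v = 𝒞.embed p
  injOn : ∀ u, Set.InjOn col (S u)
  disjoint : ∀ {u u'}, u ≠ u' → col u = col u' → Disjoint (S u) (S u')

lemma exists_subset_injOn_card_eq [DecidableEq P] (c : V → P) (T : Finset V) :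
    ∃ R ⊆ T, Set.InjOn c R ∧ #R = #(T.image c) := by
  obtain ⟨R, hRT, hinj, himage⟩ := exists_subset_injOn_image_eq_of_surjOn (f := c) T (T.image c)
    (by simpa using Set.surjOn_image c (T : Set V))
  exact ⟨R, mod_cast hRT, hinj, by rw [← himage, card_image_of_injOn hinj]⟩

variable [Fintype V] [Fintype P] [Fintype X]
  {B : SimpleGraph V} [DecidableRel B.Adj] {side : V → Bool} {c : V → P} {d L : ℕ}

lemma exists_isClientSelection_of_not_isDeprived [DecidableEq V] [DecidableEq P] [DecidableEq X]
    (𝒞 : ColourScheme P X k) (hL : 0 < L) (hd0 : 0 < d) (hd : ∀ v, B.degree v ≤ d)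
    (hdeg : ∀ v, d ≤ 2 * B.degree v) (hX : d + Fintype.card P ≤ Fintype.card X)
    (hr : 4 * ((2 * (4 * L) + 1) * r) ≤ k)
    (hc : ∀ u, ¬ IsDeprived B 𝒞.embed (fun u ↦ 𝒞.targets (side u)) d L c u) :
    ∃ col S, IsClientSelection 𝒞 B side col S r := by
  set available : V → X → Finset V := fun u x ↦
    servers B c (L * d) (lightNbrs B (𝒞.embed ∘ c) (4 * L) u x) (𝒞.targets (side u) x)
  choose R hR hinj hcard using fun u x ↦ exists_subset_injOn_card_eq c (available u x)
  have hmany (u : V) (x : X) (hx : x ∈ allowedColours B 𝒞.embed c d L u) :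
      (2 * (4 * L) + 1) * r ≤ #(R u x) := by
    have hlight := le_four_mul_card_lightNbrs_of_mem_allowedColours hL (hdeg u) hx
    have hnot := not_lt.1 (not_and.1 (not_exists.1 (hc u) x) hlight)
    rw [𝒞.card_targets, ← hcard u x] at hnot
    lia
  have hload (x : X) (v : V) :
      ∑ u with x ∈ allowedColours B 𝒞.embed c d L u ∧ v ∈ R u x,
        (#(allowedColours B 𝒞.embed c d L u) : ℚ)⁻¹ ≤ (4 * L : ℕ) := by
    refine (sum_le_sum_of_subset_of_nonneg ?_ fun _ _ _ ↦ inv_nonneg.2 (Nat.cast_nonneg _)).trans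
      (sum_inv_card_allowedColours_le hL hd hX x v)
    exact monotone_filter_right _ fun u _ hu ↦ ⟨hu.1, (mem_filter.1 (hR u x hu.2)).1⟩
  obtain ⟨col, S, hcol, hS, hSr, hdisj⟩ :=
    FractionalSelection.exists_selection (nonempty_allowedColours (by lia)) hmany hload
  have havailable {u v : V} (hv : v ∈ S u) := mem_filter.1 (hR u _ (hS u hv))
  have hcol_server {u v : V} (hv : v ∈ S u) : col v = 𝒞.embed (c v) :=
    eq_embed_of_mem_allowedColours (havailable hv).2.2 (hcol v)
  exact ⟨col, S,
    { adj := fun hv ↦ adj_of_mem_lightNbrs (havailable hv).1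
      card_eq := hSr
      exists_target := fun hv ↦ ⟨_, (havailable hv).2.1, hcol_server hv⟩
      injOn := fun u v hv w hw hvw ↦ hinj u _ (hS u hv) (hS u hw) <|
        𝒞.embed.injective (by rw [← hcol_server hv, ← hcol_server hw, hvw])
      disjoint := fun huu' hcol' ↦ hdisj _ _ huu' hcol' }⟩

theorem exists_isClientSelection [Nonempty P] (𝒞 : ColourScheme P X k) (side : B.Coloring Bool)
    (hd : ∀ v, B.degree v ≤ d) (hdeg : ∀ v, d ≤ 2 * B.degree v) (hP : 16 * Fintype.card P ≤ d)
    (hL : 32 * d ≤ L * Fintype.card P) (hX : d + Fintype.card P ≤ Fintype.card X)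
    (hk : 12 * Fintype.card X * (d + 1) ^ 6 * Real.exp (-k) ≤ 1)
    (hr : 4 * ((2 * (4 * L) + 1) * r) ≤ k) :
    ∃ col S, IsClientSelection 𝒞 B side col S r := by
  classical
  have hcardP : 0 < Fintype.card P := Fintype.card_pos
  have hL0 : 0 < L := Nat.pos_of_ne_zero fun h ↦ by simp only [h, zero_mul] at hL; lia
  obtain ⟨c, hc⟩ := exists_forall_not_isDeprived (e := 𝒞.embed)
    (Y := fun u ↦ 𝒞.targets (side u)) side hd (fun u x ↦ 𝒞.card_targets _ x) hP hL hk
  exact exists_isClientSelection_of_not_isDeprived 𝒞 hL0 (by lia) hd hdeg hX hr hc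

end Selection

variable {V P X : Type*} {k r : ℕ} {𝒞 : ColourScheme P X k} {B : SimpleGraph V}
  {side : B.Coloring Bool} {col : V → X} {S : V → Finset V}

/-- The graph joining every client `u` to the servers in `S u`. -/
def selectionGraph (S : V → Finset V) : SimpleGraph V := fromRel fun u v ↦ v ∈ S u

lemma mem_or_mem_of_selectionGraph_adj {u v : V} (h : (selectionGraph S).Adj u v) :
    v ∈ S u ∨ u ∈ S v := h.2

namespace IsClientSelection

lemma selectionGraph_le (hS : IsClientSelection 𝒞 B side col S r) : selectionGraph S ≤ B :=
  fun _ _ h ↦ (mem_or_mem_of_selectionGraph_adj h).elim hS.adj fun hu ↦ (hS.adj hu).symm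

lemma le_deg_selectionGraph [Finite V] (hS : IsClientSelection 𝒞 B side col S r) (v : V) :
    r ≤ deg (selectionGraph S) v := by
  rw [deg, ← hS.card_eq v, ← Set.ncard_coe_finset]
  exact Set.ncard_le_ncard (fun w hw ↦ ⟨(hS.adj hw).ne, .inl hw⟩) (Set.toFinite _)

lemma rel_of_mem (hS : IsClientSelection 𝒞 B side col S r) {u v : V} (hv : v ∈ S u) :
    𝒞.Rel (col u) (col v) := by
  obtain ⟨p, hp, hcol⟩ := hS.exists_target hv
  exact hcol ▸ 𝒞.rel_of_mem_targets hp

lemma orient_of_mem (hS : IsClientSelection 𝒞 B side col S r) {u v : V} (hv : v ∈ S u) :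
    𝒞.orient (col u) (col v) = side u := by
  obtain ⟨p, hp, hcol⟩ := hS.exists_target hv
  exact hcol ▸ 𝒞.orient_of_mem_targets hp

lemma rel_of_adj (hS : IsClientSelection 𝒞 B side col S r) {u v : V}
    (h : (selectionGraph S).Adj u v) : 𝒞.Rel (col u) (col v) :=
  (mem_or_mem_of_selectionGraph_adj h).elim hS.rel_of_mem fun hu ↦ 𝒞.rel_symm (hS.rel_of_mem hu)

lemma col_server_ne_col_client (hS : IsClientSelection 𝒞 B side col S r) {u v w : V}
    (hv : v ∈ S u) (hu : u ∈ S w) : col v ≠ col w := by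
  intro hcol
  have hside : side u = side w := by
    rw [← hS.orient_of_mem hv, ← hS.orient_of_mem hu, 𝒞.orient_comm, hcol]
  exact side.valid (hS.adj hu).symm hside

lemma injOn_neighborSet (hS : IsClientSelection 𝒞 B side col S r) (u : V) :
    Set.InjOn col ((selectionGraph S).neighborSet u) := by
  intro v hv w hw hcol
  obtain hv | hv := mem_or_mem_of_selectionGraph_adj hv <;>
    obtain hw | hw := mem_or_mem_of_selectionGraph_adj hw
  · exact hS.injOn u hv hw hcol
  · exact absurd hcol (hS.col_server_ne_col_client hv hw)
  · exact absurd hcol.symm (hS.col_server_ne_col_client hw hv)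
  · by_contra hvw
    exact disjoint_left.1 (hS.disjoint hvw hcol) hv hw

lemma eq_or_eq_of_adj (hS : IsClientSelection 𝒞 B side col S r) {u u' v v' : V}
    (huv : (selectionGraph S).Adj u v) (huv' : (selectionGraph S).Adj u v')
    (hu'v : (selectionGraph S).Adj u' v) (hu'v' : (selectionGraph S).Adj u' v') :
    u = u' ∨ v = v' :=
  (𝒞.eq_or_eq_of_rel (hS.rel_of_adj huv) (hS.rel_of_adj huv') (hS.rel_of_adj hu'v)
    (hS.rel_of_adj hu'v')).imp (hS.injOn_neighborSet v huv.symm hu'v.symm)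
    (hS.injOn_neighborSet u huv huv')

end IsClientSelection

end ColourSelection

section Main

open Finset GraphTools ColourSelection

lemma not_containsCopy_completeBipartiteGraph {V : Type*} {H : SimpleGraph V}
    (hH : ∀ {u u' v v'}, H.Adj u v → H.Adj u v' → H.Adj u' v → H.Adj u' v' → u = u' ∨ v = v')
    {b : ℕ} (hb : 2 ≤ b) : ¬ ContainsCopy (completeBipartiteGraph (Fin 2) (Fin b)) H := by
  rintro ⟨f, hf⟩
  have hadj (i : Fin 2) (j : Fin b) : H.Adj (f (.inl i)) (f (.inr j)) := f.map_rel (by simp)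
  obtain h | h := hH (hadj 0 ⟨0, by lia⟩) (hadj 0 ⟨1, by lia⟩) (hadj 1 ⟨0, by lia⟩)
    (hadj 1 ⟨1, by lia⟩) <;> simpa using hf h

/-- The numerical conditions under which a `d`-regular graph has a subgraph without 4-cycles of
minimum degree at least `r`, obtained from colours in the plane over `ZMod q` with `k` palette
colours available to each client. -/
structure AdmissibleParameters (d q k r : ℕ) : Prop where
  prime : q.Prime
  pos : 0 < k
  two_mul_le : 2 * k ≤ q
  card_palette_le : 16 * (k * (2 * q)) ≤ d
  le_card_palette : 32 * d ≤ 4096 * (k * (2 * q))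
  add_card_palette_le : d + k * (2 * q) ≤ q * q
  exp_le : 12 * (q * q : ℝ) * (d + 1) ^ 6 * Real.exp (-k) ≤ 1
  mul_le : 4 * ((2 * (4 * 4096) + 1) * r) ≤ k

lemma degree_eq_of_regularDeg {V : Type*} [Fintype V] {G : SimpleGraph V} [DecidableRel G.Adj]
    {d : ℕ} (hG : RegularDeg G d) (v : V) : G.degree v = d := by
  rw [← hG v, deg, ← card_neighborFinset_eq_degree, ← Set.ncard_coe_finset, coe_neighborFinset]

theorem exists_subgraph_of_admissibleParameters {V : Type*} [Finite V] {G : SimpleGraph V}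
    {d q k r : ℕ} (hG : RegularDeg G d) (hpar : AdmissibleParameters d q k r) :
    ∃ H ≤ G, (∀ b, 2 ≤ b → ¬ ContainsCopy (completeBipartiteGraph (Fin 2) (Fin b)) H) ∧
      ∀ v, r ≤ deg H v := by
  classical
  have := Fintype.ofFinite V
  have : Fact q.Prime := ⟨hpar.prime⟩
  have : NeZero k := ⟨hpar.pos.ne'⟩
  obtain ⟨side, hside⟩ := exists_cutGraph_degree_le G
  have hdeg (v : V) := degree_eq_of_regularDeg hG v
  have hcardP : Fintype.card (AffinePalette q k) = k * (2 * q) := by simp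
  have hcardX : Fintype.card (ZMod q × ZMod q) = q * q := by simp
  obtain ⟨col, S, hS⟩ := exists_isClientSelection (d := d) (L := 4096) (r := r)
    (affineScheme hpar.two_mul_le) (.mk side And.right : (cutGraph G side).Coloring Bool)
    (fun v ↦ hdeg v ▸ degree_le_of_le (cutGraph_le G side)) (fun v ↦ hdeg v ▸ hside v)
    (hcardP ▸ hpar.card_palette_le) (hcardP ▸ hpar.le_card_palette)
    (hcardP ▸ hcardX ▸ hpar.add_card_palette_le) (by simpa [hcardX] using hpar.exp_le) hpar.mul_le
  exact ⟨selectionGraph S, hS.selectionGraph_le.trans (cutGraph_le G side),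
    fun b ↦ not_containsCopy_completeBipartiteGraph hS.eq_or_eq_of_adj, hS.le_deg_selectionGraph⟩

lemma eventually_mul_pow_mul_exp_neg_le_one (C : ℝ) (n : ℕ) :
    ∀ᶠ k : ℕ in Filter.atTop, C * (k : ℝ) ^ n * Real.exp (-k) ≤ 1 := by
  have hlim := ((Real.tendsto_pow_mul_exp_neg_atTop_nhds_zero n).const_mul C).comp
    tendsto_natCast_atTop_atTop
  rw [mul_zero] at hlim
  filter_upwards [hlim.eventually_le_const one_pos] with k hk
  simpa [mul_assoc] using hk

theorem exists_admissibleParameters : ∃ d₀ : ℕ, ∀ d ≥ d₀, ∃ q k r : ℕ,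
    AdmissibleParameters d q k r ∧ √(d : ℝ) ≤ 2 ^ 27 * r := by
  obtain ⟨k₀, hk₀⟩ := Filter.eventually_atTop.1
    (eventually_mul_pow_mul_exp_neg_le_one (192 * 512 ^ 14) 14)
  refine ⟨(256 * (k₀ + 262144)) ^ 2, fun d hd ↦ ?_⟩
  set s := d.sqrt
  have hsd : s * s ≤ d := Nat.sqrt_le d
  have hds : d + 1 ≤ (s + 1) * (s + 1) := Nat.lt_succ_sqrt d
  have hs : 256 * (k₀ + 262144) ≤ s := Nat.le_sqrt'.2 hd
  obtain ⟨q, hq, hsq, hqs⟩ := Nat.exists_prime_lt_and_le_two_mul (2 * (s + 1)) (by lia)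
  set k := s / 256
  have hks : 256 * k ≤ s := by lia
  have hsk : s + 1 ≤ 512 * k := by lia
  refine ⟨q, k, k / 262144,
    { prime := hq
      pos := by lia
      two_mul_le := by lia
      card_palette_le := by nlinarith [Nat.mul_le_mul hks hqs]
      le_card_palette := by nlinarith [Nat.mul_le_mul hsk hsq.le]
      add_card_palette_le := by
        have hgap : s + 1 + 2 * k ≤ q := by lia
        nlinarith [Nat.mul_le_mul hgap hsq.le]
      exp_le := ?_
      mul_le := by lia }, ?_⟩
  · refine (hk₀ k (by lia)).trans' (mul_le_mul_of_nonneg_right ?_ (Real.exp_pos _).le)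
    have hqk : (q : ℝ) ≤ 4 * (512 * k) := mod_cast (by lia : q ≤ 4 * (512 * k))
    have hdk : (d + 1 : ℝ) ≤ (512 * k) * (512 * k) := mod_cast hds.trans (Nat.mul_le_mul hsk hsk)
    calc 12 * (q * q : ℝ) * (d + 1) ^ 6
        ≤ 12 * ((4 * (512 * k)) * (4 * (512 * k))) * ((512 * k) * (512 * k)) ^ 6 := by gcongr
      _ = 192 * 512 ^ 14 * (k : ℝ) ^ 14 := by ring
  · have hds' : d ≤ (s + 1) ^ 2 := by lia
    calc √(d : ℝ) ≤ (s + 1 : ℕ) := Real.sqrt_le_iff.2 ⟨by positivity, mod_cast hds'⟩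
      _ ≤ 2 ^ 27 * (k / 262144 : ℕ) := mod_cast (by lia)

end Main

theorem statement12_general.{u} : ∃ (c : ℝ) (d₀ : ℕ), 0 < c ∧
    ∀ d : ℕ, d₀ ≤ d → ∀ (V : Type u) [Finite V] (G : SimpleGraph V), RegularDeg G d →
      ∃ H : SimpleGraph V, H ≤ G ∧
        (∀ b, 2 ≤ b → ¬ ContainsCopy (completeBipartiteGraph (Fin 2) (Fin b)) H) ∧
        ∀ v : V, c * Real.sqrt (d : ℝ) ≤ (deg H v : ℝ) := by
  obtain ⟨d₀, hd₀⟩ := exists_admissibleParameters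
  refine ⟨(2 ^ 27)⁻¹, d₀, by positivity, fun d hd V _ G hG ↦ ?_⟩
  obtain ⟨q, k, r, hpar, hsqrt⟩ := hd₀ d hd
  obtain ⟨H, hHG, hfree, hdeg⟩ := exists_subgraph_of_admissibleParameters hG hpar
  refine ⟨H, hHG, hfree, fun v ↦ (inv_mul_le_iff₀ (by positivity)).2 (hsqrt.trans ?_)⟩
  gcongr
  exact hdeg v

theorem statement12 (b : ℕ) (hb : 2 ≤ b) :
    ∃ (c : ℝ) (d₀ : ℕ), 0 < c ∧
      ∀ d : ℕ, d₀ ≤ d →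
        ∀ (V : Type) [Fintype V] (G : SimpleGraph V), RegularDeg G d →
          ∃ H : SimpleGraph V, H ≤ G ∧
            ¬ ContainsCopy (completeBipartiteGraph (Fin 2) (Fin b)) H ∧
            ∀ v : V, c * Real.sqrt (d : ℝ) ≤ (deg H v : ℝ) := by
  obtain ⟨c, d₀, hc, h⟩ := statement12_general
  exact ⟨c, d₀, hc, fun d hd V _ G hG ↦
    (h d hd V G hG).imp fun H ⟨hHG, hfree, hdeg⟩ ↦ ⟨hHG, hfree b hb, hdeg⟩⟩
end

section
/- For every integer b ≥ 3 there exist a constant c > 0 and an integer d₀ such that for all d ≥ d₀, every d-regular graph G has a spanning subgraph H containing no copy of the complete bipartite graph K_{3,b} and with minimum degree δ(H) ≥ c·d^{2/3}. -/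
open SimpleGraph

/-!
It is enough to forbid `K_{3,3}`. If `Γ` is `K_{3,3}`-free and a graph `H` has a homomorphism to `Γ`
that is injective on neighbourhoods, then `H` is `K_{3,3}`-free as well. For a prime `p` of order
`d ^ (1 / 3)`, the projective norm graph is such a `Γ`, with about `p ^ 3` vertices of degree about
`p ^ 2`. Pass to a bipartite spanning subgraph `B` of `G` keeping half of every degree, colour the
vertices of `B` by vertices of `Γ`, and keep the edges whose colours are adjacent in `Γ` and at
which the colouring is injective on neighbourhoods; the survivors at a vertex should number about
`d / p`, which is of order `d ^ (2 / 3)`.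

In a uniformly random colouring, some vertices cause conflicts with too many of their neighbours;
these are recoloured from a reserved part of the palette by a fixed greedy colouring. Each vertex
then keeps enough edges outside an event of probability `exp (-Ω(d ^ (2 / 3)))`, by an
exponential-moment bound that exposes the colours of its neighbours one at a time. The event depends
only on the colours within distance four, so the Lovász local lemma applies.
-/

section LocallyInjective

variable {V W α α' β β' : Type*} {H : SimpleGraph V} {Γ : SimpleGraph W}

theorem ContainsCopy.completeBipartiteGraph_mono (f : α ↪ α') (g : β ↪ β')
    (h : ContainsCopy (completeBipartiteGraph α' β') H) :
    ContainsCopy (completeBipartiteGraph α β) H := by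
  obtain ⟨φ, hφ⟩ := h
  let ι : completeBipartiteGraph α β →g completeBipartiteGraph α' β' :=
    { toFun := Sum.map f g, map_rel' := by rintro (a | a) (b | b) <;> simp }
  exact ⟨φ.comp ι, hφ.comp (Sum.map_injective.2 ⟨f.injective, g.injective⟩)⟩

theorem ContainsCopy.comp_of_locallyInjective [Nonempty α] [Nonempty β] {φ : H →g Γ}
    (hφ : LocallyInjective φ) (h : ContainsCopy (completeBipartiteGraph α β) H) :
    ContainsCopy (completeBipartiteGraph α β) Γ := by
  obtain ⟨f, hf⟩ := h
  have hadj (a : α) (b : β) : H.Adj (f (.inl a)) (f (.inr b)) := f.map_adj (by simp)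
  have hne (a : α) (b : β) : φ (f (.inl a)) ≠ φ (f (.inr b)) := (φ.map_adj (hadj a b)).ne
  refine ⟨φ.comp f, ?_⟩
  rintro (a | a) (b | b) hab
  · obtain ⟨c⟩ := ‹Nonempty β›
    exact hf (hφ (f (.inr c)) (hadj a c).symm (hadj b c).symm hab)
  · exact absurd hab (hne a b)
  · exact absurd hab.symm (hne b a)
  · obtain ⟨c⟩ := ‹Nonempty α›
    exact hf (hφ (f (.inl c)) (hadj c a) (hadj c b) hab)

end LocallyInjective

section NormGraph

theorem false_of_mul_map_eq_of_sub_mul_map_sub_eq {K : Type*} [Field K] (σ : K →+* K)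
    {y : Fin 3 → K} (hy : y.Injective) {e c c' : K} (he : e ≠ 0)
    (hc : ∀ j, y j * σ (y j) = c) (hc' : ∀ j, (y j - e) * σ (y j - e) = c') : False := by
  -- Eliminating `σ (y j)` shows that the `y j` are three distinct roots of one quadratic
  -- polynomial.
  have hne {i j : Fin 3} (hij : i ≠ j) : y i - y j ≠ 0 := sub_ne_zero.2 (hy.ne hij)
  have hlin (j : Fin 3) : y j * σ e + σ (y j) * e = c - c' + e * σ e := by
    rw [← hc j, ← hc' j, map_sub]
    ring
  have hsum {j : Fin 3} (hj : 0 ≠ j) : c - c' + e * σ e - σ e * (y 0 + y j) = 0 := by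
    refine (mul_eq_zero.1 ?_).resolve_left (hne hj)
    linear_combination e * hc 0 - e * hc j - y 0 * hlin 0 + y j * hlin j
  have hmul : σ e * (y 1 - y 2) = 0 := by
    linear_combination hsum (j := 2) (by decide) - hsum (j := 1) (by decide)
  exact mul_ne_zero ((map_ne_zero σ).2 he) (hne (by decide)) hmul

theorem false_of_add_mul_map_add_eq_mul {K : Type*} [Field K] (σ : K →+* K) {A B a b : Fin 3 → K}
    (hA : A.Injective) (hB : B.Injective) (ha : ∀ i, a i ≠ 0) (hb : ∀ j, b j ≠ 0)
    (h : ∀ i j, (A i + B j) * σ (A i + B j) = a i * b j) : False := by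
  -- Dividing the equations for `i = 0, 1` by the one for `i = 2` makes the right sides independent
  -- of `j`.
  have hX (j) : A 2 + B j ≠ 0 := fun hj => by
    simpa [hj, ha, hb] using (h 2 j).symm
  have hne {i j : Fin 3} (hij : i ≠ j) : A i - A j ≠ 0 := sub_ne_zero.2 (hA.ne hij)
  have hnorm {i : Fin 3} (hi : i ≠ 2) (j) :
      ((A 2 + B j)⁻¹ + (A i - A 2)⁻¹) * σ ((A 2 + B j)⁻¹ + (A i - A 2)⁻¹) =
        a i / a 2 / ((A i - A 2) * σ (A i - A 2)) := by
    have hsum : (A 2 + B j)⁻¹ + (A i - A 2)⁻¹ = (A i + B j) / ((A 2 + B j) * (A i - A 2)) := by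
      have := hX j
      have := hne hi
      field_simp
      ring
    have hden : (A 2 + B j) * (A i - A 2) * (σ (A 2 + B j) * σ (A i - A 2)) =
        a 2 * b j * ((A i - A 2) * σ (A i - A 2)) := by
      rw [← h 2 j]
      ring
    have := ha 2
    have := hb j
    have := hne hi
    have := (map_ne_zero σ).2 (hne hi)
    rw [hsum, map_div₀, div_mul_div_comm, h i j, map_mul, hden]
    field_simp
  refine false_of_mul_map_eq_of_sub_mul_map_sub_eq σ
    (y := fun j => (A 2 + B j)⁻¹ + (A 0 - A 2)⁻¹) (e := (A 0 - A 2)⁻¹ - (A 1 - A 2)⁻¹)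
    (c' := a 1 / a 2 / ((A 1 - A 2) * σ (A 1 - A 2)))
    (fun i j hij => hB (add_left_cancel (inv_injective (add_right_cancel hij)))) ?_
    (hnorm (by decide)) (fun j => ?_)
  · exact sub_ne_zero.2 fun h01 => hne (i := 0) (j := 1) (by decide)
      (by linear_combination inv_injective h01)
  · rw [show (A 2 + B j)⁻¹ + (A 0 - A 2)⁻¹ - ((A 0 - A 2)⁻¹ - (A 1 - A 2)⁻¹) =
      (A 2 + B j)⁻¹ + (A 1 - A 2)⁻¹ by ring]
    exact hnorm (by decide) j

/-- The projective norm graph of a field extension `K / k`: the vertices `(x, s)` and `(y, t)` are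
adjacent when `N(x + y) = s * t`, with loops removed. For a quadratic extension of finite fields it
is the dense `K_{3,3}`-free graph that serves as the set of colours. -/
def normGraph (k K : Type*) [Field k] [Field K] [Algebra k K] : SimpleGraph (K × kˣ) where
  Adj x y := x ≠ y ∧ Algebra.norm k (x.1 + y.1) = x.2 * y.2
  symm := ⟨fun x y h => ⟨h.1.symm, by rw [add_comm, h.2, mul_comm]⟩⟩
  loopless := ⟨fun _ h => h.1 rfl⟩

variable {k K : Type*} [Field k] [Field K] [Algebra k K]

theorem algebraMap_norm_eq_mul_frobeniusAlgHom [Fintype k] [Finite K]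
    (h2 : Module.finrank k K = 2) (x : K) :
    algebraMap k K (Algebra.norm k x) = x * FiniteField.frobeniusAlgHom k K x := by
  simp [FiniteField.algebraMap_norm_eq_prod_pow, h2, Finset.prod_range_succ,
    Nat.card_eq_fintype_card]

theorem eq_of_normGraph_adj_of_fst_eq {x y z : K × kˣ} (hx : (normGraph k K).Adj z x)
    (hy : (normGraph k K).Adj z y) (h : x.1 = y.1) : x = y := by
  refine Prod.ext h (Units.ext (mul_left_cancel₀ z.2.ne_zero ?_))
  rw [← hx.2, ← hy.2, h]

theorem not_containsCopy_normGraph [Finite k] [Finite K] (h2 : Module.finrank k K = 2) :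
    ¬ ContainsCopy (completeBipartiteGraph (Fin 3) (Fin 3)) (normGraph k K) := by
  rintro ⟨f, hf⟩
  have := Fintype.ofFinite k
  have hadj (i j : Fin 3) : (normGraph k K).Adj (f (.inl i)) (f (.inr j)) := f.map_adj (by simp)
  refine false_of_add_mul_map_add_eq_mul (FiniteField.frobeniusAlgHom k K : K →+* K)
    (A := fun i => (f (.inl i)).1) (B := fun j => (f (.inr j)).1)
    (a := fun i => algebraMap k K (f (.inl i)).2) (b := fun j => algebraMap k K (f (.inr j)).2)
    (fun i i' h => ?_) (fun j j' h => ?_) (fun i => by simp) (fun j => by simp) (fun i j => ?_)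
  · exact Sum.inl_injective
      (hf (eq_of_normGraph_adj_of_fst_eq (hadj i 0).symm (hadj i' 0).symm h))
  · exact Sum.inr_injective (hf (eq_of_normGraph_adj_of_fst_eq (hadj 0 j) (hadj 0 j') h))
  · rw [← map_mul, ← (hadj i j).2]
    exact (algebraMap_norm_eq_mul_frobeniusAlgHom h2 _).symm

open scoped Classical in
theorem card_normGraph_adj_le [Fintype k] [DecidableEq k] [Fintype K] (S : Finset K) (x : K × kˣ) :
    Finset.card {y | (normGraph k K).Adj x y ∧ y.1 ∈ S} ≤ S.card :=
  Finset.card_le_card_of_injOn Prod.fst (fun y hy => by simp_all) fun y hy z hz h => by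
    simp only [Finset.coe_filter, Finset.mem_univ, true_and, Set.mem_ofPred_eq] at hy hz
    exact eq_of_normGraph_adj_of_fst_eq hy.1 hz.1 h

open scoped Classical in
theorem card_le_card_normGraph_adj_add_two [Fintype k] [DecidableEq k] [Fintype K]
    (S : Finset K) (x : K × kˣ) :
    S.card ≤ Finset.card {y | (normGraph k K).Adj x y ∧ y.1 ∈ S} + 2 := by
  have hsub : S ⊆ Finset.image Prod.fst {y | (normGraph k K).Adj x y ∧ y.1 ∈ S} ∪
      {-x.1, x.1} := fun A hA => by
    by_cases hA0 : A = -x.1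
    · simp [hA0]
    by_cases hAx : A = x.1
    · simp [hAx]
    have hsum : x.1 + A ≠ 0 := fun h => hA0 (eq_neg_of_add_eq_zero_right h)
    refine Finset.mem_union_left _ (Finset.mem_image.2
      ⟨(A, x.2⁻¹ * Units.mk0 _ (Algebra.norm_ne_zero_iff.2 hsum)), ?_, rfl⟩)
    simp only [Finset.mem_filter_univ]
    exact ⟨⟨fun h => hAx (by rw [h]), by simp⟩, hA⟩
  calc S.card ≤ _ := Finset.card_le_card hsub
    _ ≤ _ := Finset.card_union_le _ _
    _ ≤ _ := add_le_add Finset.card_image_le Finset.card_le_two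

open scoped Classical in
theorem exists_sum_normGraph (p : ℕ) [Fact p.Prime] :
    ∃ (α β : Type) (_ : Fintype α) (_ : Fintype β) (Γ : SimpleGraph (α ⊕ β)),
      ¬ ContainsCopy (completeBipartiteGraph (Fin 3) (Fin 3)) Γ ∧
      Fintype.card α = p ^ 2 / 2 * (p - 1) ∧ p ^ 2 / 2 * (p - 1) ≤ Fintype.card β ∧
      ∀ x, Finset.card {a | Γ.Adj x (.inl a)} ≤ p ^ 2 / 2 ∧
        p ^ 2 / 2 ≤ Finset.card {a | Γ.Adj x (.inl a)} + 2 := by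
  let K := GaloisField p 2
  have := Fintype.ofFinite K
  have hK : Fintype.card K = p ^ 2 := by
    rw [← Nat.card_eq_fintype_card, GaloisField.card p 2 two_ne_zero]
  obtain ⟨S, -, hS⟩ := (Finset.univ : Finset K).exists_subset_card_eq
    (n := p ^ 2 / 2) (by rw [Finset.card_univ, hK]; exact Nat.div_le_self _ _)
  let e := Equiv.sumCompl fun x : K × (ZMod p)ˣ => x.1 ∈ S
  let Γ := (normGraph (ZMod p) K).comap e
  have hα : Fintype.card {x : K × (ZMod p)ˣ // x.1 ∈ S} = p ^ 2 / 2 * (p - 1) := by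
    rw [Fintype.card_subtype, ← hS, ← ZMod.card_units p, ← Finset.card_univ, ← Finset.card_product]
    congr 1
    ext
    simp
  have hΓ (x) [DecidablePred fun a => Γ.Adj x (.inl a)] : Finset.card {a | Γ.Adj x (.inl a)} =
      Finset.card {y | (normGraph (ZMod p) K).Adj (e x) y ∧ y.1 ∈ S} := by
    refine Finset.card_bij (fun a _ => a.1) (fun a ha => ?_) (fun _ _ _ _ => Subtype.ext) ?_
    · rw [Finset.mem_filter_univ] at ha ⊢
      exact ⟨ha, a.2⟩
    · intro y hy
      rw [Finset.mem_filter_univ] at hy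
      exact ⟨⟨y, hy.2⟩, (Finset.mem_filter_univ _).2 hy.1, rfl⟩
  refine ⟨_, _, inferInstance, inferInstance, Γ, ?_, hα, ?_, fun x => ?_⟩
  · rintro ⟨f, hf⟩
    exact not_containsCopy_normGraph (GaloisField.finrank p two_ne_zero)
      ⟨(SimpleGraph.Iso.comap e _).toHom.comp f, e.injective.comp hf⟩
  · rw [Fintype.card_subtype_compl, hα, Fintype.card_prod, hK, ZMod.card_units p, ← Nat.sub_mul]
    gcongr
    omega
  · rw [hΓ, ← hS]
    exact ⟨card_normGraph_adj_le S _, card_le_card_normGraph_adj_add_two S _⟩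

end NormGraph

section MaxCut

open Matrix

variable {V : Type*} (G : SimpleGraph V)

theorem deg_eq_degree (v : V) [Fintype (G.neighborSet v)] : deg G v = G.degree v := by
  rw [deg, Set.ncard_eq_toFinset_card', ← neighborFinset_def, card_neighborFinset_eq_degree]

theorem dotProduct_mulVec_sub_single [Fintype V] [DecidableEq V] {R : Type*}
    [CommRing R] {A : Matrix V V R} (hA : A.IsSymm) (s : V → R) (v : V) (c : R) :
    (s - Pi.single v c) ⬝ᵥ A *ᵥ (s - Pi.single v c) =
      s ⬝ᵥ A *ᵥ s - 2 * c * (A *ᵥ s) v + c ^ 2 * A v v := by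
  have hsymm : s ⬝ᵥ A *ᵥ Pi.single v c = c * (A *ᵥ s) v := by
    rw [dotProduct_mulVec, ← mulVec_transpose, hA.eq, dotProduct_single, mul_comm]
  rw [mulVec_sub, dotProduct_sub, sub_dotProduct, sub_dotProduct, hsymm, single_dotProduct,
    single_dotProduct, mulVec_single]
  simp only [Pi.smul_apply, col_apply, op_smul_eq_mul]
  ring

-- Take the signs minimising the quadratic form of the adjacency matrix: flipping the sign of `v`
-- changes it by `-4` times the quantity to be bounded.
theorem exists_units_int_mul_sum_neighborFinset_nonpos [Fintype V] [DecidableRel G.Adj] :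
    ∃ s : V → ℤˣ, ∀ v, (s v : ℤ) * ∑ w ∈ G.neighborFinset v, (s w : ℤ) ≤ 0 := by
  classical
  let val (s : V → ℤˣ) (v : V) : ℤ := s v
  obtain ⟨s, hs⟩ := Finite.exists_min fun s : V → ℤˣ => val s ⬝ᵥ G.adjMatrix ℤ *ᵥ val s
  refine ⟨s, fun v => ?_⟩
  have hflip : val (Function.update s v (-s v)) = val s - Pi.single v (2 * (s v : ℤ)) := by
    ext w
    obtain rfl | hw := eq_or_ne w v
    · simp only [val, Function.update_self, Units.val_neg, Pi.sub_apply, Pi.single_eq_same]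
      ring
    · simp [val, hw]
  have hle := hs (Function.update s v (-s v))
  rw [hflip, dotProduct_mulVec_sub_single G.isSymm_adjMatrix, adjMatrix_mulVec_apply] at hle
  simp only [adjMatrix_apply, G.irrefl, if_false] at hle
  linarith

theorem exists_le_coloring_deg_le_two_mul [Finite V] :
    ∃ B ≤ G, Nonempty (B.Coloring Bool) ∧ ∀ v, deg G v ≤ 2 * deg B v := by
  classical
  have := Fintype.ofFinite V
  obtain ⟨s, hs⟩ := exists_units_int_mul_sum_neighborFinset_nonpos G
  let B : SimpleGraph V :=
    { Adj u w := G.Adj u w ∧ s u ≠ s w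
      symm := ⟨fun _ _ h => ⟨h.1.symm, h.2.symm⟩⟩
      loopless := ⟨fun _ h => h.2 rfl⟩ }
  refine ⟨B, fun _ _ h => h.1, ⟨.mk (fun v => decide (s v = 1)) fun {u w} h => ?_⟩, fun v => ?_⟩
  · obtain hu | hu := Int.units_eq_one_or (s u) <;> obtain hw | hw := Int.units_eq_one_or (s w) <;>
      simp_all [B]
  · have hB : B.neighborFinset v = {w ∈ G.neighborFinset v | s v ≠ s w} := by
      ext
      simp [B]
    have hmul (w : V) : (s v : ℤ) * s w = if s v ≠ s w then -1 else 1 := by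
      obtain hv | hv := Int.units_eq_one_or (s v) <;>
        obtain hw | hw := Int.units_eq_one_or (s w) <;> simp [hv, hw]
    have hsum := hs v
    simp only [Finset.mul_sum, hmul, Finset.sum_ite, Finset.sum_const] at hsum
    have hcard := Finset.card_filter_add_card_filter_not (s := G.neighborFinset v)
      fun w => s v ≠ s w
    rw [deg_eq_degree, deg_eq_degree, ← card_neighborFinset_eq_degree,
      ← card_neighborFinset_eq_degree, hB]
    lia

end MaxCut

section ExponentialMoment

open Finset Function

theorem card_filter_mul_le_sum {ι : Type*} [Fintype ι] {F : ι → ℝ} (hF : ∀ i, 0 ≤ F i) {c : ℝ}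
    {p : ι → Prop} [DecidablePred p] (hp : ∀ i, p i → c ≤ F i) : #{i | p i} * c ≤ ∑ i, F i := by
  rw [← nsmul_eq_mul]
  exact (card_nsmul_le_sum _ _ _ fun i hi => hp i ((mem_filter_univ i).1 hi)).trans
    (sum_le_univ_sum_of_nonneg hF)

variable {V Q : Type*} [Fintype Q]

theorem sum_sum_update [Fintype V] [DecidableEq V] {R : Type*} [NonAssocSemiring R] (v : V)
    (F : (V → Q) → R) : ∑ χ, ∑ a, F (update χ v a) = Fintype.card Q * ∑ χ, F χ := by
  have hswap : ∑ x : (V → Q) × Q, F (update x.1 v x.2) = ∑ x : (V → Q) × Q, F x.1 :=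
    sum_nbij' (fun x => (update x.1 v x.2, x.1 v)) (fun x => (update x.1 v x.2, x.1 v))
      (by simp) (by simp) (by simp) (by simp) (by simp)
  rw [← Fintype.sum_prod_type', hswap, Fintype.sum_prod_type_right]
  simp

variable [LinearOrder V]

/-- The random variables `f z`, `z ∈ T`, on the product space `V → Q` form an adapted process: when
the coordinates in `T` are exposed in increasing order, `f z` is determined once `z` is exposed. -/
def Nonanticipating {δ : Type*} (T : Finset V) (f : V → (V → Q) → δ) : Prop :=
  ∀ z ∈ T, ∀ v ∈ T, z < v → ∀ χ a, f z (update χ v a) = f z χ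

variable [Fintype V] [Nonempty Q]

theorem sum_prod_le_card_of_nonanticipating {T : Finset V} {w : V → (V → Q) → ℝ}
    (hw : Nonanticipating T w) (hw₀ : ∀ z χ, 0 ≤ w z χ)
    (havg : ∀ z ∈ T, ∀ χ, ∑ a, w z (update χ z a) ≤ Fintype.card Q) :
    ∑ χ, ∏ z ∈ T, w z χ ≤ Fintype.card (V → Q) := by
  induction T using Finset.induction_on_max with
  | empty => simp
  | insert v T hT ih =>
    have hv : v ∉ T := fun h => lt_irrefl _ (hT v h)
    have hprod (χ a) : ∏ z ∈ insert v T, w z (update χ v a) =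
        w v (update χ v a) * ∏ z ∈ T, w z χ := by
      rw [prod_insert hv]
      congr 1
      exact prod_congr rfl fun z hz =>
        hw z (mem_insert_of_mem hz) v (mem_insert_self _ _) (hT z hz) χ a
    have hstep : Fintype.card Q * ∑ χ, ∏ z ∈ insert v T, w z χ ≤
        Fintype.card Q * ∑ χ, ∏ z ∈ T, w z χ := by
      rw [← sum_sum_update v, mul_sum]
      simp_rw [hprod, ← sum_mul]
      gcongr with χ
      · exact prod_nonneg fun z _ => hw₀ z χ
      · exact havg v (mem_insert_self _ _) χ
    refine (le_of_mul_le_mul_left hstep (by exact_mod_cast Fintype.card_pos)).trans (ih ?_ ?_)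
    · exact fun z hz u hu => hw z (mem_insert_of_mem hz) u (mem_insert_of_mem hu)
    · exact fun z hz => havg z (mem_insert_of_mem hz)

variable {T : Finset V} {P : V → (V → Q) → Prop}

open scoped Classical in
theorem sum_pow_card_div_pow_card_le (hP : Nonanticipating T P) {S : (V → Q) → Finset V}
    (hST : ∀ χ, S χ ⊆ T) (hS : ∀ v ∈ T, ∀ χ a, S (update χ v a) = S χ) {θ q : ℝ} (hθ : 0 ≤ θ)
    (hq : 0 < q) (havg : ∀ z ∈ T, ∀ χ,
      Fintype.card Q + (θ - 1) * #{a | P z (update χ z a)} ≤ q * Fintype.card Q) :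
    ∑ χ, θ ^ #{z ∈ S χ | P z χ} / q ^ #(S χ) ≤ Fintype.card (V → Q) := by
  have hprod (χ) : θ ^ #{z ∈ S χ | P z χ} / q ^ #(S χ) =
      ∏ z ∈ T, if z ∈ S χ then (if P z χ then θ else 1) / q else 1 := by
    rw [prod_ite_mem, inter_eq_right.2 (hST χ), prod_div_distrib, prod_const, prod_ite]
    simp
  simp_rw [hprod]
  refine sum_prod_le_card_of_nonanticipating (fun z hz v hv hzv χ a => ?_)
    (fun z χ => by positivity) fun z hz χ => ?_
  · rw [hS v hv, hP z hz v hv hzv]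
  · simp only [hS z hz]
    by_cases hzS : z ∈ S χ
    · simp only [hzS, if_true]
      rw [← sum_div, div_le_iff₀ hq, sum_ite, mul_comm]
      refine le_trans (le_of_eq ?_) (havg z hz χ)
      rw [← Finset.card_univ, ← card_filter_add_card_filter_not fun a => P z (update χ z a)]
      simp only [sum_const, nsmul_eq_mul, Nat.cast_add]
      ring
    · simp [hzS]

open scoped Classical in
theorem card_lt_card_filter_le (hP : Nonanticipating T P) {d m : ℕ} (hd : #T ≤ d)
    (hm : ∀ z ∈ T, ∀ χ, #{a | P z (update χ z a)} ≤ m) (L : ℕ) :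
    (#{χ | L < #{z ∈ T | P z χ}} : ℝ) ≤
      Fintype.card (V → Q) * (Real.exp (d * (m / Fintype.card Q)) / 2 ^ L) := by
  have hQ : 0 < (Fintype.card Q : ℝ) := by exact_mod_cast Fintype.card_pos
  have hmoment := sum_pow_card_div_pow_card_le hP (S := fun _ => T) (fun _ => subset_rfl)
    (fun _ _ _ _ => rfl) zero_le_two (Real.exp_pos (m / Fintype.card Q)) fun z hz χ => by
      have hexp := mul_le_mul_of_nonneg_right (Real.add_one_le_exp (m / Fintype.card Q)) hQ.le
      have hm' : (#{a | P z (update χ z a)} : ℝ) ≤ m := by exact_mod_cast hm z hz χ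
      rw [add_mul, div_mul_cancel₀ _ hQ.ne'] at hexp
      linarith
  have hmarkov := (card_filter_mul_le_sum (p := fun χ => L < #{z ∈ T | P z χ})
    (c := 2 ^ L / Real.exp (m / Fintype.card Q) ^ d) (fun χ => by positivity)
    fun χ hχ => ?_).trans hmoment
  · rw [Real.exp_nat_mul]
    rw [← le_div_iff₀ (by positivity)] at hmarkov
    exact hmarkov.trans_eq (by field_simp)
  · gcongr
    · exact one_le_two
    · exact Real.one_le_exp (by positivity)

open scoped Classical in
theorem card_card_filter_lt_le (hP : Nonanticipating T P) {S : (V → Q) → Finset V}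
    (hST : ∀ χ, S χ ⊆ T) (hS : ∀ v ∈ T, ∀ χ a, S (update χ v a) = S χ) {r h : ℕ}
    (hr : ∀ χ, r ≤ #(S χ)) (hh : ∀ z ∈ T, ∀ χ, h ≤ #{a | P z (update χ z a)}) (t : ℕ) :
    (#{χ | #{z ∈ S χ | P z χ} < t} : ℝ) ≤
      Fintype.card (V → Q) * (2 ^ t * Real.exp (-(r * (h / (2 * Fintype.card Q))))) := by
  have hQ : 0 < (Fintype.card Q : ℝ) := by exact_mod_cast Fintype.card_pos
  have hmoment := sum_pow_card_div_pow_card_le hP hST hS (θ := 1 / 2) (by norm_num)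
    (Real.exp_pos (-(h / (2 * Fintype.card Q)))) fun z hz χ => by
      have hexp := mul_le_mul_of_nonneg_right
        (Real.add_one_le_exp (-(h / (2 * Fintype.card Q)))) hQ.le
      have hh' : (h : ℝ) ≤ #{a | P z (update χ z a)} := by exact_mod_cast hh z hz χ
      have hcancel : -(h / (2 * Fintype.card Q) : ℝ) * Fintype.card Q = -(h / 2) := by field_simp
      rw [add_mul, hcancel] at hexp
      linarith
  have hmarkov := (card_filter_mul_le_sum (p := fun χ => #{z ∈ S χ | P z χ} < t)
    (c := (1 / 2) ^ t / Real.exp (-(h / (2 * Fintype.card Q))) ^ r) (fun χ => by positivity)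
    fun χ hχ => ?_).trans hmoment
  · rw [← mul_neg, Real.exp_nat_mul]
    rw [← le_div_iff₀ (by positivity)] at hmarkov
    exact hmarkov.trans_eq (by rw [one_div, inv_pow]; field_simp)
  · gcongr ?_ / ?_
    · exact pow_le_pow_of_le_one (by norm_num) (by norm_num) hχ.le
    · exact pow_le_pow_of_le_one (Real.exp_pos _).le
        (Real.exp_le_one_iff.2 (neg_nonpos.2 (by positivity))) (hr χ)

end ExponentialMoment

section LocalLemma

open Finset

variable {V Q ι : Type*} [Fintype V] [Fintype Q]

theorem card_and_mul_card_eq_of_dependsOn [DecidableEq V] {A B : (V → Q) → Prop}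
    [DecidablePred A] [DecidablePred B] {D : Finset V} (hA : DependsOn A D)
    (hB : DependsOn B (D : Set V)ᶜ) :
    #{χ | A χ ∧ B χ} * Fintype.card (V → Q) = #{χ | A χ} * #{χ | B χ} := by
  have hA' (χ ω : V → Q) : A (D.piecewise χ ω) = A χ :=
    hA fun y hy => D.piecewise_eq_of_mem _ _ hy
  have hB' (χ ω : V → Q) : B (D.piecewise ω χ) = B χ :=
    hB fun y hy => D.piecewise_eq_of_notMem _ _ hy
  have hinv (x : (V → Q) × (V → Q)) :
      (D.piecewise (D.piecewise x.1 x.2) (D.piecewise x.2 x.1),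
        D.piecewise (D.piecewise x.2 x.1) (D.piecewise x.1 x.2)) = x := by
    ext z <;> by_cases hz : z ∈ D <;> simp [hz]
  rw [← Finset.card_univ, ← card_product, ← card_product]
  refine card_nbij' (fun x => (D.piecewise x.1 x.2, D.piecewise x.2 x.1))
    (fun x => (D.piecewise x.1 x.2, D.piecewise x.2 x.1)) ?_ ?_ (fun x _ => hinv x)
    fun x _ => hinv x <;>
  · rintro ⟨χ, ω⟩ h
    simpa [hA', hB'] using h

variable {E : ι → (V → Q) → Prop} {D : ι → Finset V}

open scoped Classical in
/-- The points of the product space at which none of the events `E i`, `i ∈ S`, occurs. -/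
noncomputable def avoiding (E : ι → (V → Q) → Prop) (S : Finset ι) : Finset (V → Q) :=
  {χ | ∀ i ∈ S, ¬ E i χ}

@[simp]
theorem mem_avoiding {S : Finset ι} {χ : V → Q} : χ ∈ avoiding E S ↔ ∀ i ∈ S, ¬ E i χ := by
  simp [avoiding]

variable {K : ℕ}

open scoped Classical in
theorem card_avoiding_le_two_mul {S S' : Finset ι} (hK : 0 < K) (hSS' : #(S \ S') ≤ K)
    (hE : ∀ i ∈ S \ S', #{χ ∈ avoiding E S' | E i χ} * (2 * K) ≤ #(avoiding E S')) :
    #(avoiding E S') ≤ 2 * #(avoiding E S) := by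
  have hsub : avoiding E S' ⊆
      avoiding E S ∪ (S \ S').biUnion fun i => {χ ∈ avoiding E S' | E i χ} := fun χ hχ => by
    by_cases h : ∃ i ∈ S \ S', E i χ
    · exact mem_union_right _ (by simpa [hχ] using h)
    · push Not at h
      refine mem_union_left _ (mem_avoiding.2 fun i hi => ?_)
      by_cases hi' : i ∈ S'
      · exact mem_avoiding.1 hχ i hi'
      · exact h i (mem_sdiff.2 ⟨hi, hi'⟩)
  have hcard : #(avoiding E S') * (2 * K) ≤
      #(avoiding E S) * (2 * K) + K * #(avoiding E S') :=
    calc #(avoiding E S') * (2 * K)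
        ≤ (#(avoiding E S) + ∑ i ∈ S \ S', #{χ ∈ avoiding E S' | E i χ}) * (2 * K) := by
          gcongr
          exact (card_le_card hsub).trans
            ((card_union_le _ _).trans (add_le_add_right card_biUnion_le _))
      _ = #(avoiding E S) * (2 * K) +
          ∑ i ∈ S \ S', #{χ ∈ avoiding E S' | E i χ} * (2 * K) := by rw [add_mul, sum_mul]
      _ ≤ #(avoiding E S) * (2 * K) + #(S \ S') * #(avoiding E S') := by
          gcongr
          exact sum_le_card_nsmul _ _ _ hE
      _ ≤ _ := by gcongr
  exact Nat.le_of_mul_le_mul_left (by linarith) hK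

variable [Fintype ι] [Nonempty Q]

open scoped Classical in
theorem card_filter_avoiding_mul_le (hD : ∀ i, DependsOn (E i) (D i)) (hK : 0 < K)
    (hdep : ∀ i, #{j | ¬ Disjoint (D i) (D j)} ≤ K)
    (hE : ∀ i, #{χ | E i χ} * (4 * K) ≤ Fintype.card (V → Q)) (S : Finset ι) (i : ι) :
    #{χ ∈ avoiding E S | E i χ} * (2 * K) ≤ #(avoiding E S) := by
  induction S using Finset.strongInduction generalizing i with
  | H S ih =>
    set S' : Finset ι := {j ∈ S | Disjoint (D i) (D j)} with hS'
    have hindep : #{χ | E i χ ∧ χ ∈ avoiding E S'} * Fintype.card (V → Q) =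
        #{χ | E i χ} * #(avoiding E S') := by
      rw [card_and_mul_card_eq_of_dependsOn (B := fun χ => χ ∈ avoiding E S') (hD i)
        fun χ ω h => ?_, filter_univ_mem]
      simp only [mem_avoiding]
      refine propext (forall₂_congr fun j hj => not_congr (iff_of_eq (hD j fun y hy => h y ?_)))
      exact disjoint_right.1 (mem_filter.1 hj).2 hy
    have hcond : #{χ ∈ avoiding E S | E i χ} * (4 * K) ≤ #(avoiding E S') := by
      refine Nat.le_of_mul_le_mul_left ?_ (Fintype.card_pos (α := V → Q))
      calc Fintype.card (V → Q) * (#{χ ∈ avoiding E S | E i χ} * (4 * K))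
          ≤ Fintype.card (V → Q) * (#{χ | E i χ ∧ χ ∈ avoiding E S'} * (4 * K)) := by
            gcongr
            intro χ
            simp +contextual [hS']
        _ = #{χ | E i χ} * (4 * K) * #(avoiding E S') := by linear_combination (4 * K) * hindep
        _ ≤ _ := by gcongr; exact hE i
    have hS : #(avoiding E S') ≤ 2 * #(avoiding E S) := by
      refine card_avoiding_le_two_mul hK ?_ fun j hj => ih S' ?_ j
      · refine (card_le_card fun j hj => ?_).trans (hdep i)
        simp_all
      · rw [mem_sdiff] at hj
        exact (filter_subset _ _).ssubset_of_mem_notMem hj.1 hj.2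
    linarith

open scoped Classical in
theorem lovasz_local_lemma_of_dependsOn (hD : ∀ i, DependsOn (E i) (D i)) (hK : 0 < K)
    (hdep : ∀ i, #{j | ¬ Disjoint (D i) (D j)} ≤ K)
    (hE : ∀ i, #{χ | E i χ} * (4 * K) ≤ Fintype.card (V → Q)) : ∃ χ, ∀ i, ¬ E i χ := by
  have hpos (S : Finset ι) : 0 < #(avoiding E S) := by
    induction S using Finset.induction_on with
    | empty => simpa [avoiding] using Fintype.card_pos (α := V → Q)
    | insert i S _ ih =>
      have hcond := card_filter_avoiding_mul_le hD hK hdep hE S i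
      have hlt : #{χ ∈ avoiding E S | E i χ} < #(avoiding E S) := by nlinarith
      obtain ⟨χ, hχ, hχi⟩ := exists_mem_notMem_of_card_lt_card hlt
      exact card_pos.2 ⟨χ, by simp_all⟩
  obtain ⟨χ, hχ⟩ := card_pos.1 (hpos univ)
  exact ⟨χ, fun i => mem_avoiding.1 hχ i (mem_univ i)⟩

end LocalLemma

section Ball

variable {V : Type*} {G : SimpleGraph V}

theorem exists_edist_le_edist_le_one {v w : V} {k : ℕ} (h : G.edist v w ≤ k + 1) :
    ∃ u, G.edist v u ≤ k ∧ G.edist u w ≤ 1 := by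
  obtain ⟨p, hp⟩ := exists_walk_of_edist_ne_top (ne_top_of_le_ne_top (by simp) h)
  rw [← hp] at h
  have hlen : p.length ≤ k + 1 := by exact_mod_cast h
  refine ⟨p.getVert k, (p.take k).edist_le.trans ?_, (p.drop k).edist_le.trans ?_⟩
  · rw [p.take_length]
    exact_mod_cast min_le_left _ _
  · rw [p.drop_length]
    exact_mod_cast Nat.sub_le_iff_le_add'.2 hlen

variable [Fintype V] [DecidableRel G.Adj]

open scoped Classical in
theorem card_edist_le_le_pow {d : ℕ} (hd : ∀ v, G.degree v ≤ d) (v : V) (k : ℕ) :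
    Finset.card {w | G.edist v w ≤ k} ≤ (d + 1) ^ k := by
  induction k with
  | zero => simp [edist_eq_zero_iff, Finset.filter_eq]
  | succ k ih =>
    have hsub : ({w | G.edist v w ≤ (k + 1 : ℕ)} : Finset V) ⊆
        Finset.biUnion {u | G.edist v u ≤ k} fun u => insert u (G.neighborFinset u) := by
      intro w hw
      obtain ⟨u, hvu, huw⟩ := exists_edist_le_edist_le_one (by simpa using hw)
      rw [edist_le_one_iff_adj_or_eq] at huw
      simp only [Finset.mem_biUnion, Finset.mem_filter_univ, Finset.mem_insert,
        mem_neighborFinset]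
      exact ⟨u, hvu, huw.symm.imp_left Eq.symm⟩
    rw [pow_succ]
    refine (Finset.card_le_card hsub).trans ((Finset.card_biUnion_le_card_mul _ _ (d + 1)
      fun u _ => ?_).trans (Nat.mul_le_mul_right _ ih))
    exact (Finset.card_insert_le _ _).trans (Nat.succ_le_succ (hd u))

end Ball

section Conflict

open Finset Function

variable {V γ : Type*} [Fintype V] [LinearOrder V] [DecidableEq γ]
  (B : SimpleGraph V) [DecidableRel B.Adj]

/-- The neighbours of `v` that already see the colour `a` at a neighbour preceding `v`: giving `v`
the colour `a` makes the colouring non-injective on the neighbourhood of each of them. -/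
def conflicts (χ : V → γ) (v : V) (a : γ) : Finset V :=
  {u ∈ B.neighborFinset v | ∃ w ∈ B.neighborFinset u, w < v ∧ χ w = a}

/-- The neighbours of `u` preceding `v` whose colour lies in the set `M`. -/
def precedingIn (χ : V → γ) (M : Finset γ) (v u : V) : Finset V :=
  {w ∈ B.neighborFinset u | w < v ∧ χ w ∈ M}

/-- The colour of `v` causes at most `τ` conflicts. -/
def Uncrowded (τ : ℕ) (χ : V → γ) (v : V) : Prop :=
  #(conflicts B χ v (χ v)) ≤ τ

instance (τ : ℕ) (χ : V → γ) : DecidablePred (Uncrowded B τ χ) := fun _ => Nat.decLe _ _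

/-- The spanning subgraph of `B` whose edges are mapped by `κ` to edges of `Γ` and are not conflicts
at either end. -/
def conflictFree (Γ : SimpleGraph γ) (κ : V → γ) : SimpleGraph V where
  Adj x z := B.Adj x z ∧ Γ.Adj (κ x) (κ z) ∧ z ∉ conflicts B κ x (κ x) ∧ x ∉ conflicts B κ z (κ z)
  symm := ⟨fun _ _ h => ⟨h.1.symm, h.2.1.symm, h.2.2.2, h.2.2.1⟩⟩
  loopless := ⟨fun _ h => B.irrefl h.1⟩

variable {B} {Γ : SimpleGraph γ} {κ χ : V → γ} {v : V}

theorem conflictFree_le : conflictFree B Γ κ ≤ B := fun _ _ h => h.1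

theorem exists_locallyInjective_conflictFree :
    ∃ φ : conflictFree B Γ κ →g Γ, LocallyInjective φ := by
  have hne {u v w : V} (hv : (conflictFree B Γ κ).Adj u v) (hw : B.Adj u w) (hwv : w < v) :
      κ w ≠ κ v := fun h => hv.2.2.2 <| by
    simp only [conflicts, mem_filter, mem_neighborFinset]
    exact ⟨hv.1.symm, w, hw, hwv, h⟩
  refine ⟨⟨κ, fun h => h.2.1⟩, fun u v hv w hw h => ?_⟩
  obtain hlt | heq | hgt := lt_trichotomy v w
  · exact absurd h (hne hw hv.1 hlt)
  · exact heq
  · exact absurd h.symm (hne hv hw.1 hgt)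

theorem not_containsCopy_conflictFree {α β : Type*} [Nonempty α] [Nonempty β]
    (hΓ : ¬ ContainsCopy (completeBipartiteGraph α β) Γ) :
    ¬ ContainsCopy (completeBipartiteGraph α β) (conflictFree B Γ κ) := fun h =>
  hΓ (h.comp_of_locallyInjective exists_locallyInjective_conflictFree.choose_spec)

theorem conflicts_congr {χ' : V → γ} (h : ∀ u w, B.Adj v u → B.Adj u w → χ w = χ' w) (a : γ) :
    conflicts B χ v a = conflicts B χ' v a := by
  refine filter_congr fun u hu => exists_congr fun w => and_congr_right fun hw => ?_
  rw [h u w (by simpa using hu) (by simpa using hw)]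

theorem conflictFree_adj_congr {κ' : V → γ} {x : V} (h : ∀ w, B.edist x w ≤ 2 → κ w = κ' w)
    (z : V) : (conflictFree B Γ κ).Adj x z ↔ (conflictFree B Γ κ').Adj x z := by
  have h₁ {w : V} (hw : B.Adj x w) : κ w = κ' w :=
    h w ((edist_eq_one_iff_adj.2 hw).le.trans one_le_two)
  have h₂ {u w : V} (hu : B.Adj x u) (hw : B.Adj u w) : κ w = κ' w := by
    refine h w (B.edist_triangle.trans_eq (b := B.edist x u + B.edist u w) ?_)
    rw [edist_eq_one_iff_adj.2 hu, edist_eq_one_iff_adj.2 hw, one_add_one_eq_two]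
  refine and_congr_right fun hxz => ?_
  have hz : x ∈ conflicts B κ z (κ z) ↔ x ∈ conflicts B κ' z (κ' z) := by
    simp only [conflicts, mem_filter, mem_neighborFinset, h₁ hxz]
    exact and_congr_right fun _ => exists_congr fun w => and_congr_right fun hw => by rw [h₁ hw]
  rw [hz, h₁ hxz, h x (by simp), conflicts_congr fun u w hu hw => h₂ hu hw]

theorem conflicts_update_of_le {y z : V} (h : z ≤ y) (b a : γ) :
    conflicts B (update χ y b) z a = conflicts B χ z a := by
  refine filter_congr fun u _ => exists_congr fun w => and_congr_right fun _ =>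
    and_congr_right fun hw => ?_
  rw [update_of_ne (hw.trans_le h).ne]

theorem precedingIn_update_of_le {y z : V} (h : z ≤ y) (M : Finset γ) (b : γ) (u : V) :
    precedingIn B (update χ y b) M z u = precedingIn B χ M z u := by
  refine filter_congr fun w _ => and_congr_right fun hw => ?_
  rw [update_of_ne (hw.trans_le h).ne]

theorem card_filter_mem_conflicts_le (M : Finset γ) (u : V) :
    #{a ∈ M | u ∈ conflicts B χ v a} ≤ #(precedingIn B χ M v u) := by
  refine (card_le_card fun a ha => ?_).trans (card_image_le (f := χ))
  simp only [conflicts, mem_filter] at ha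
  obtain ⟨haM, -, w, hw, hwv, rfl⟩ := ha
  exact mem_image_of_mem χ (mem_filter.2 ⟨hw, hwv, haM⟩)

theorem card_filter_lt_card_conflicts_mul_le {M : Finset γ} {L : ℕ} (τ : ℕ)
    (h : ∀ u ∈ B.neighborFinset v, #(precedingIn B χ M v u) ≤ L) :
    #{a ∈ M | τ < #(conflicts B χ v a)} * (τ + 1) ≤ B.degree v * L := by
  have hsub (a : γ) : {u ∈ B.neighborFinset v | u ∈ conflicts B χ v a} = conflicts B χ v a := by
    rw [filter_mem_eq_inter, inter_eq_right]
    exact filter_subset _ _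
  calc #{a ∈ M | τ < #(conflicts B χ v a)} * (τ + 1)
      ≤ ∑ a ∈ M with τ < #(conflicts B χ v a), #(conflicts B χ v a) :=
        card_nsmul_le_sum _ _ (τ + 1) fun a ha => (mem_filter.1 ha).2
    _ ≤ ∑ a ∈ M, #(conflicts B χ v a) := sum_le_sum_of_subset (filter_subset _ _)
    _ = ∑ u ∈ B.neighborFinset v, #{a ∈ M | u ∈ conflicts B χ v a} := by
        simpa only [bipartiteAbove, bipartiteBelow, hsub] using
          (sum_card_bipartiteAbove_eq_sum_card_bipartiteBelow (s := B.neighborFinset v) (t := M)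
            fun u a => u ∈ conflicts B χ v a).symm
    _ ≤ ∑ _ ∈ B.neighborFinset v, L :=
        sum_le_sum fun u hu => (card_filter_mem_conflicts_le M u).trans (h u hu)
    _ = B.degree v * L := by rw [sum_const, smul_eq_mul, card_neighborFinset_eq_degree]

theorem exists_forall_uncrowded [Fintype γ] {d τ : ℕ} (hd : ∀ v, B.degree v ≤ d)
    (hcard : d * d < Fintype.card γ * (τ + 1)) : ∃ ψ : V → γ, ∀ v, Uncrowded B τ ψ v := by
  have hγ : Nonempty γ := Fintype.card_pos_iff.1 (Nat.pos_of_mul_pos_right (pos_of_gt hcard))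
  suffices h : ∀ S : Finset V, ∃ ψ : V → γ, ∀ v ∈ S, Uncrowded B τ ψ v by
    simpa using h univ
  intro S
  induction S using Finset.induction_on_max with
  | empty => simp
  | insert v S hS ih =>
    obtain ⟨ψ, hψ⟩ := ih
    have hcrowded : #{a | τ < #(conflicts B ψ v a)} * (τ + 1) ≤ d * d :=
      (card_filter_lt_card_conflicts_mul_le τ fun u _ =>
        (card_le_card (filter_subset _ _)).trans (hd u)).trans (Nat.mul_le_mul_right _ (hd v))
    obtain ⟨a, -, ha⟩ := exists_mem_notMem_of_card_lt_card
      (Nat.lt_of_mul_lt_mul_right (hcrowded.trans_lt hcard))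
    refine ⟨update ψ v a, fun z hz => ?_⟩
    obtain rfl | hz := mem_insert.1 hz
    · rw [Uncrowded, conflicts_update_of_le le_rfl, update_self]
      simpa using ha
    · rw [Uncrowded, conflicts_update_of_le (hS z hz).le, update_of_ne (hS z hz).ne]
      exact hψ z hz

end Conflict

theorem coloring_eq_of_adj_of_adj {V : Type*} {G : SimpleGraph V} (C : G.Coloring Bool)
    {u v w : V} (hvu : G.Adj v u) (huw : G.Adj u w) : C w = C v :=
  (Bool.eq_not.2 (C.valid huw).symm).trans (Bool.eq_not.2 (C.valid hvu)).symm

section MixedColoring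

open Finset Function

variable {V α β : Type*} [Fintype V] [LinearOrder V] [DecidableEq α]
  (B : SimpleGraph V) [DecidableRel B.Adj] (τ : ℕ) (ψ : V → β)

/-- The colouring `χ`, with the colour of every crowded vertex replaced by its colour under the
fallback colouring `ψ`, which uses a disjoint set of colours. -/
def mixed (χ : V → α) (v : V) : α ⊕ β :=
  if Uncrowded B τ χ v then .inl (χ v) else .inr (ψ v)

variable {B τ ψ} {χ χ' : V → α} {v w : V}

theorem eq_of_mixed_eq_inl {a : α} (h : mixed B τ ψ χ w = .inl a) : χ w = a := by
  unfold mixed at h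
  split_ifs at h
  exact Sum.inl_injective h

theorem eq_of_mixed_eq_inr {b : β} (h : mixed B τ ψ χ w = .inr b) : ψ w = b := by
  unfold mixed at h
  split_ifs at h
  exact Sum.inr_injective h

theorem mixed_congr (hv : χ v = χ' v) (h : ∀ u w, B.Adj v u → B.Adj u w → χ w = χ' w) :
    mixed B τ ψ χ v = mixed B τ ψ χ' v := by
  have huncrowded : Uncrowded B τ χ v ↔ Uncrowded B τ χ' v := by
    rw [Uncrowded, Uncrowded, hv, conflicts_congr h]
  simp only [mixed, hv, huncrowded]

theorem mixed_congr_of_edist_le_two (h : ∀ w, B.edist v w ≤ 2 → χ w = χ' w) :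
    mixed B τ ψ χ v = mixed B τ ψ χ' v := by
  refine mixed_congr (h v (by simp)) fun u w hu hw => h w ?_
  refine (B.edist_triangle (v := u)).trans_eq ?_
  rw [edist_eq_one_iff_adj.2 hu, edist_eq_one_iff_adj.2 hw, one_add_one_eq_two]

theorem mixed_update_of_coloring_ne (C : B.Coloring Bool) {y : V} (hy : C v ≠ C y) (a : α) :
    mixed B τ ψ (update χ y a) v = mixed B τ ψ χ v := by
  refine mixed_congr (update_of_ne (ne_of_apply_ne C hy) _ _) fun u w hu hw => ?_
  have hne : C w ≠ C y := by rwa [coloring_eq_of_adj_of_adj C hu hw]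
  exact update_of_ne (ne_of_apply_ne C hne) _ _

variable [DecidableEq β]

theorem conflicts_mixed_inl_subset (a : α) :
    conflicts B (mixed B τ ψ χ) v (.inl a) ⊆ conflicts B χ v a :=
  monotone_filter_right _ fun _ _ ⟨w, hw, hwv, h⟩ => ⟨w, hw, hwv, eq_of_mixed_eq_inl h⟩

theorem conflicts_mixed_inr_subset (b : β) :
    conflicts B (mixed B τ ψ χ) v (.inr b) ⊆ conflicts B ψ v b :=
  monotone_filter_right _ fun _ _ ⟨w, hw, hwv, h⟩ => ⟨w, hw, hwv, eq_of_mixed_eq_inr h⟩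

theorem uncrowded_mixed (hψ : ∀ v, Uncrowded B τ ψ v) (v : V) :
    Uncrowded B τ (mixed B τ ψ χ) v := by
  by_cases hv : Uncrowded B τ χ v
  · rw [Uncrowded, show mixed B τ ψ χ v = .inl (χ v) from if_pos hv]
    exact (card_le_card (conflicts_mixed_inl_subset _)).trans hv
  · rw [Uncrowded, show mixed B τ ψ χ v = .inr (ψ v) from if_neg hv]
    exact (card_le_card (conflicts_mixed_inr_subset _)).trans (hψ v)

variable (B τ ψ) in
/-- The neighbours of `v` that are not in conflict with the mixed colour of `v`. -/
def candidates (v : V) (χ : V → α) : Finset V :=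
  B.neighborFinset v \ conflicts B (mixed B τ ψ χ) v (mixed B τ ψ χ v)

theorem candidates_update (C : B.Coloring Bool) {y : V} (hy : C v ≠ C y) (a : α) :
    candidates B τ ψ v (update χ y a) = candidates B τ ψ v χ := by
  rw [candidates, candidates, mixed_update_of_coloring_ne C hy, conflicts_congr]
  intro u w hu hw
  exact mixed_update_of_coloring_ne C (by rwa [coloring_eq_of_adj_of_adj C hu hw]) a

theorem degree_le_card_candidates_add (hψ : ∀ v, Uncrowded B τ ψ v) :
    B.degree v ≤ #(candidates B τ ψ v χ) + τ := by
  rw [← card_neighborFinset_eq_degree, ← Nat.sub_le_iff_le_add]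
  exact (Nat.sub_le_sub_left (uncrowded_mixed hψ v) _).trans (le_card_sdiff _ _)

theorem dependsOn_deg_conflictFree_mixed_lt (Γ : SimpleGraph (α ⊕ β)) (t : ℕ) (x : V) :
    DependsOn (fun χ : V → α => deg (conflictFree B Γ (mixed B τ ψ χ)) x < t)
      {w | B.edist x w ≤ 4} := by
  intro χ χ' h
  have hmixed (w : V) (hw : B.edist x w ≤ 2) : mixed B τ ψ χ w = mixed B τ ψ χ' w := by
    refine mixed_congr_of_edist_le_two fun y hy => h y ?_
    calc B.edist x y ≤ B.edist x w + B.edist w y := B.edist_triangle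
      _ ≤ 2 + 2 := add_le_add hw hy
      _ = 4 := two_add_two_eq_four
  have hN : (conflictFree B Γ (mixed B τ ψ χ)).neighborSet x =
      (conflictFree B Γ (mixed B τ ψ χ')).neighborSet x :=
    Set.ext (conflictFree_adj_congr hmixed)
  simp only [deg, hN]

end MixedColoring

section FailureProbability

open Finset Function

variable {V α β : Type*} [Fintype V] [LinearOrder V] [Fintype α] [DecidableEq α]
  (B : SimpleGraph V) [DecidableRel B.Adj] (Γ : SimpleGraph (α ⊕ β)) [DecidableRel Γ.Adj]
  (τ : ℕ) (ψ : V → β)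

/-- The colours in `α` that are compatible in `Γ` with the mixed colour of `x`. -/
def compatible (x : V) (χ : V → α) : Finset α :=
  {a | Γ.Adj (mixed B τ ψ χ x) (.inl a)}

/-- Some neighbour of `z` has more than `L` neighbours preceding `z` whose colour is compatible with
`x`. -/
def Overflow (L : ℕ) (x z : V) (χ : V → α) : Prop :=
  ∃ u ∈ B.neighborFinset z, L < #(precedingIn B χ (compatible B Γ τ ψ x χ) z u)

/-- The random colour of `z` keeps a candidate edge `x z`. The overflow alternative is included so
that the conditional probability of the event given the colours preceding `z` is always bounded
below; it is excluded separately by a union bound. -/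
def Kept (L : ℕ) (x z : V) (χ : V → α) : Prop :=
  Overflow B Γ τ ψ L x z χ ∨
    χ z ∈ compatible B Γ τ ψ x χ ∧ Uncrowded B τ χ z ∧ x ∉ conflicts B χ z (χ z)

variable {B Γ τ ψ} {x y z : V} {χ : V → α} {L : ℕ}

theorem compatible_update (C : B.Coloring Bool) (hy : C x ≠ C y) (a : α) :
    compatible B Γ τ ψ x (update χ y a) = compatible B Γ τ ψ x χ := by
  simp only [compatible, mixed_update_of_coloring_ne C hy]

theorem overflow_update_of_le (C : B.Coloring Bool) (hy : C x ≠ C y) (hzy : z ≤ y) (a : α) :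
    Overflow B Γ τ ψ L x z (update χ y a) ↔ Overflow B Γ τ ψ L x z χ := by
  simp only [Overflow, compatible_update C hy, precedingIn_update_of_le hzy]

theorem nonanticipating_kept (C : B.Coloring Bool) :
    Nonanticipating (B.neighborFinset x) (Kept B Γ τ ψ L x) := by
  intro z _ y hy hzy χ a
  have hxy : C x ≠ C y := C.valid (by simpa using hy)
  simp only [Kept, Uncrowded, overflow_update_of_le C hxy hzy.le, compatible_update C hxy,
    conflicts_update_of_le hzy.le, update_of_ne hzy.ne]

open scoped Classical in
theorem card_compatible_le_card_kept_add (C : B.Coloring Bool) {k : ℕ}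
    (hd : B.degree z ≤ k * (τ + 1)) (hxz : B.Adj x z) :
    #(compatible B Γ τ ψ x χ) ≤ #{a | Kept B Γ τ ψ L x z (update χ z a)} + (k + 1) * L := by
  have hC : C x ≠ C z := C.valid hxz
  set M := compatible B Γ τ ψ x χ with hM
  by_cases hO : Overflow B Γ τ ψ L x z χ
  · refine (card_le_card fun a _ => ?_).trans (Nat.le_add_right _ _)
    exact (mem_filter_univ a).2 (.inl ((overflow_update_of_le C hC le_rfl a).2 hO))
  · have hL : ∀ u ∈ B.neighborFinset z, #(precedingIn B χ M z u) ≤ L := by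
      simpa [Overflow] using hO
    have hcrowded : #{a ∈ M | τ < #(conflicts B χ z a)} ≤ k * L := by
      refine Nat.le_of_mul_le_mul_right (c := τ + 1) ?_ τ.succ_pos
      exact (card_filter_lt_card_conflicts_mul_le τ hL).trans
        ((Nat.mul_le_mul_right L hd).trans_eq (by ring))
    have hx : #{a ∈ M | x ∈ conflicts B χ z a} ≤ L :=
      (card_filter_mem_conflicts_le M x).trans (hL x (by simpa using hxz.symm))
    have hsub : M ⊆ ({a | Kept B Γ τ ψ L x z (update χ z a)} : Finset α) ∪
        ({a ∈ M | τ < #(conflicts B χ z a)} ∪ {a ∈ M | x ∈ conflicts B χ z a}) := fun a ha => by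
      simp only [mem_union, mem_filter, mem_univ, ha, true_and, Kept, Uncrowded,
        update_self, compatible_update C hC, conflicts_update_of_le le_rfl, ← hM, ← not_lt]
      tauto
    have hcard := (card_le_card hsub).trans ((card_union_le _ _).trans
      (Nat.add_le_add_left (card_union_le _ _) _))
    linarith

open scoped Classical in
theorem card_kept_candidates_le_deg [DecidableEq β]
    (hO : ∀ z ∈ B.neighborFinset x, ¬ Overflow B Γ τ ψ L x z χ) :
    #{z ∈ candidates B τ ψ x χ | Kept B Γ τ ψ L x z χ} ≤
      deg (conflictFree B Γ (mixed B τ ψ χ)) x := by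
  rw [deg, ← Set.ncard_coe_finset]
  refine Set.ncard_le_ncard fun z hz => ?_
  obtain ⟨hcand, hkept⟩ := mem_filter.1 (mem_coe.1 hz)
  obtain ⟨hxz, hzx⟩ := mem_sdiff.1 hcand
  obtain ⟨hcompat, huncrowded, hconf⟩ := hkept.resolve_left (hO z hxz)
  have hmixed : mixed B τ ψ χ z = .inl (χ z) := if_pos huncrowded
  refine ⟨(mem_neighborFinset ..).1 hxz, ?_, hzx, ?_⟩ <;> rw [hmixed]
  · exact (mem_filter.1 hcompat).2
  · exact fun h => hconf (conflicts_mixed_inl_subset _ h)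

variable [Nonempty α] {d m : ℕ}

open scoped Classical in
theorem card_lt_card_filter_mem_compatible_le (C : B.Coloring Bool) {u : V} (hd : B.degree u ≤ d)
    (hu : ∀ w ∈ B.neighborFinset u, C x ≠ C w) (hm : ∀ c, #{a | Γ.Adj c (.inl a)} ≤ m) (L : ℕ) :
    (#{χ : V → α | L < #{w ∈ B.neighborFinset u | χ w ∈ compatible B Γ τ ψ x χ}} : ℝ) ≤
      Fintype.card (V → α) * (Real.exp (d * (m / Fintype.card α)) / 2 ^ L) := by
  have hnon : Nonanticipating (B.neighborFinset u) fun w χ => χ w ∈ compatible B Γ τ ψ x χ := by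
    intro w _ y hy hwy χ a
    simp only [compatible_update C (hu y hy), update_of_ne hwy.ne]
  convert card_lt_card_filter_le hnon hd (fun w hw χ => ?_) L
  simp only [update_self, compatible_update C (hu w hw), filter_univ_mem]
  exact hm _

open scoped Classical in
theorem card_exists_overflow_le (C : B.Coloring Bool) (hd : ∀ v, B.degree v ≤ d)
    (hm : ∀ c, #{a | Γ.Adj c (.inl a)} ≤ m) :
    (#{χ | ∃ z ∈ B.neighborFinset x, Overflow B Γ τ ψ L x z χ} : ℝ) ≤
      Fintype.card (V → α) * (d ^ 2 * (Real.exp (d * (m / Fintype.card α)) / 2 ^ L)) := by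
  set U := (B.neighborFinset x).biUnion fun z => B.neighborFinset z
  have hcardU : (#U : ℝ) ≤ d ^ 2 := by
    have hle : #U ≤ #(B.neighborFinset x) * d := card_biUnion_le_card_mul _ _ d fun z _ => hd z
    exact_mod_cast (hle.trans (Nat.mul_le_mul_right d (hd x))).trans_eq (sq d).symm
  have hC : ∀ u ∈ U, ∀ w ∈ B.neighborFinset u, C x ≠ C w := by
    intro u hu w hw
    obtain ⟨z, hz, hzu⟩ := mem_biUnion.1 hu
    rw [mem_neighborFinset] at hz hzu hw
    rw [← coloring_eq_of_adj_of_adj C hz hzu]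
    exact C.valid hw
  have hsub : ({χ | ∃ z ∈ B.neighborFinset x, Overflow B Γ τ ψ L x z χ} : Finset (V → α)) ⊆
      U.biUnion fun u => {χ | L < #{w ∈ B.neighborFinset u | χ w ∈ compatible B Γ τ ψ x χ}} := by
    intro χ hχ
    obtain ⟨z, hz, u, hu, hlt⟩ := (mem_filter_univ χ).1 hχ
    refine mem_biUnion.2 ⟨u, mem_biUnion.2 ⟨z, hz, hu⟩, (mem_filter_univ χ).2 ?_⟩
    exact hlt.trans_le (card_le_card (monotone_filter_right _ fun w _ hw => hw.2))
  calc (#{χ | ∃ z ∈ B.neighborFinset x, Overflow B Γ τ ψ L x z χ} : ℝ)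
      ≤ ∑ u ∈ U, (#{χ : V → α | L < #{w ∈ B.neighborFinset u | χ w ∈
          compatible B Γ τ ψ x χ}} : ℝ) := by
        exact_mod_cast (card_le_card hsub).trans card_biUnion_le
    _ ≤ #U * (Fintype.card (V → α) * (Real.exp (d * (m / Fintype.card α)) / 2 ^ L)) := by
        rw [← nsmul_eq_mul]
        exact sum_le_card_nsmul _ _ _ fun u hu =>
          card_lt_card_filter_mem_compatible_le C (hd u) (hC u hu) hm L
    _ ≤ d ^ 2 * (Fintype.card (V → α) * (Real.exp (d * (m / Fintype.card α)) / 2 ^ L)) := by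
        gcongr
    _ = _ := by ring

open scoped Classical in
theorem card_deg_conflictFree_mixed_lt_le [DecidableEq β] (C : B.Coloring Bool)
    (hψ : ∀ v, Uncrowded B τ ψ v) {h k r : ℕ} (hd : ∀ v, B.degree v ≤ d)
    (hr : r + τ ≤ B.degree x) (hk : d ≤ k * (τ + 1))
    (hm : ∀ c, #{a | Γ.Adj c (.inl a)} ≤ m)
    (hh : ∀ c, h + (k + 1) * L ≤ #{a | Γ.Adj c (.inl a)}) (t : ℕ) :
    (#{χ | deg (conflictFree B Γ (mixed B τ ψ χ)) x < t} : ℝ) ≤ Fintype.card (V → α) *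
      (2 ^ t * Real.exp (-(r * (h / (2 * Fintype.card α)))) +
        d ^ 2 * (Real.exp (d * (m / Fintype.card α)) / 2 ^ L)) := by
  have hkept := card_card_filter_lt_le (nonanticipating_kept (Γ := Γ) (τ := τ) (ψ := ψ) (L := L) C)
    (S := candidates B τ ψ x) (fun χ => sdiff_subset)
    (fun y hy χ a => candidates_update C (C.valid (by simpa using hy)) a)
    (fun χ => Nat.le_of_add_le_add_right (hr.trans (degree_le_card_candidates_add hψ)))
    (fun z hz χ => Nat.le_of_add_le_add_right ((hh _).trans
      (card_compatible_le_card_kept_add C ((hd z).trans hk) (by simpa using hz)))) t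
  have hsub : ({χ | deg (conflictFree B Γ (mixed B τ ψ χ)) x < t} : Finset (V → α)) ⊆
      ({χ | #{z ∈ candidates B τ ψ x χ | Kept B Γ τ ψ L x z χ} < t} : Finset (V → α)) ∪
        ({χ | ∃ z ∈ B.neighborFinset x, Overflow B Γ τ ψ L x z χ} : Finset (V → α)) := by
    intro χ hχ
    by_cases hO : ∃ z ∈ B.neighborFinset x, Overflow B Γ τ ψ L x z χ
    · exact mem_union_right _ ((mem_filter_univ χ).2 hO)
    · push Not at hO
      exact mem_union_left _ ((mem_filter_univ χ).2
        ((card_kept_candidates_le_deg hO).trans_lt ((mem_filter_univ χ).1 hχ)))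
  rw [mul_add]
  exact (Nat.cast_le.2 ((card_le_card hsub).trans (card_union_le _ _))).trans
    ((Nat.cast_add _ _).trans_le (add_le_add hkept (card_exists_overflow_le C hd hm)))

end FailureProbability

section Existence

open Finset

open scoped Classical in
theorem card_not_disjoint_edist_le_le_pow {V : Type*} [Fintype V] {B : SimpleGraph V}
    [DecidableRel B.Adj] {d : ℕ} (hd : ∀ v, B.degree v ≤ d) (v : V) (k : ℕ) :
    #{w | ¬ Disjoint ({u | B.edist v u ≤ k} : Finset V) ({u | B.edist w u ≤ k} : Finset V)} ≤
      (d + 1) ^ (k + k) := by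
  refine (card_le_card fun w hw => ?_).trans (card_edist_le_le_pow hd v (k + k))
  simp only [mem_filter_univ, not_disjoint_iff] at hw ⊢
  obtain ⟨u, hvu, hwu⟩ := hw
  rw [SimpleGraph.edist_comm] at hwu
  exact B.edist_triangle.trans ((add_le_add hvu hwu).trans_eq (Nat.cast_add k k).symm)

variable {V α β : Type*} [Fintype α] [Nonempty α] {Γ : SimpleGraph (α ⊕ β)}
  {d h k L m r t τ : ℕ}

open scoped Classical in
theorem exists_forall_le_deg_conflictFree_mixed [Fintype V] [LinearOrder V] {B : SimpleGraph V}
    {ψ : V → β} (C : B.Coloring Bool) (hψ : ∀ v, Uncrowded B τ ψ v) (hd : ∀ v, B.degree v ≤ d)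
    (hr : ∀ v, r + τ ≤ B.degree v) (hk : d ≤ k * (τ + 1))
    (hm : ∀ c, #{a | Γ.Adj c (.inl a)} ≤ m)
    (hh : ∀ c, h + (k + 1) * L ≤ #{a | Γ.Adj c (.inl a)})
    (hfail : (2 ^ t * Real.exp (-(r * (h / (2 * Fintype.card α)))) +
      d ^ 2 * (Real.exp (d * (m / Fintype.card α)) / 2 ^ L)) * (4 * (d + 1) ^ 8) ≤ 1) :
    ∃ χ : V → α, ∀ v, t ≤ deg (conflictFree B Γ (mixed B τ ψ χ)) v := by
  have hprob (v : V) : #{χ : V → α | deg (conflictFree B Γ (mixed B τ ψ χ)) v < t} *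
      (4 * (d + 1) ^ 8) ≤ Fintype.card (V → α) := by
    have hle := mul_le_mul_of_nonneg_right
      (card_deg_conflictFree_mixed_lt_le (Γ := Γ) C hψ hd (hr v) hk hm hh t)
      (by positivity : (0 : ℝ) ≤ 4 * (d + 1) ^ 8)
    rw [mul_assoc] at hle
    exact_mod_cast hle.trans (mul_le_of_le_one_right (Nat.cast_nonneg _) hfail)
  let ball (v : V) : Finset V := {w | B.edist v w ≤ (4 : ℕ)}
  have hdependsOn (v : V) :
      DependsOn (fun χ : V → α => deg (conflictFree B Γ (mixed B τ ψ χ)) v < t) (ball v) := by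
    simpa [ball] using dependsOn_deg_conflictFree_mixed_lt Γ t v
  obtain ⟨χ, hχ⟩ := lovasz_local_lemma_of_dependsOn hdependsOn (K := (d + 1) ^ 8) (by positivity)
    (fun v => card_not_disjoint_edist_le_le_pow hd v 4) fun v => by convert hprob v
  exact ⟨χ, fun v => not_lt.1 (hχ v)⟩

open scoped Classical in
theorem exists_le_not_containsCopy_forall_le_deg [Finite V] [Fintype β] {G : SimpleGraph V}
    {ι κ : Type*} [Nonempty ι] [Nonempty κ]
    (hΓ : ¬ ContainsCopy (completeBipartiteGraph ι κ) Γ) (hd : ∀ v, deg G v ≤ d)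
    (hr : ∀ v, 2 * (r + τ) ≤ deg G v) (hβ : d * d < Fintype.card β * (τ + 1))
    (hk : d ≤ k * (τ + 1)) (hm : ∀ c, #{a | Γ.Adj c (.inl a)} ≤ m)
    (hh : ∀ c, h + (k + 1) * L ≤ #{a | Γ.Adj c (.inl a)})
    (hfail : (2 ^ t * Real.exp (-(r * (h / (2 * Fintype.card α)))) +
      d ^ 2 * (Real.exp (d * (m / Fintype.card α)) / 2 ^ L)) * (4 * (d + 1) ^ 8) ≤ 1) :
    ∃ H ≤ G, ¬ ContainsCopy (completeBipartiteGraph ι κ) H ∧ ∀ v, t ≤ deg H v := by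
  have := Fintype.ofFinite V
  let : LinearOrder V := LinearOrder.lift' _ (Fintype.equivFin V).injective
  obtain ⟨B, hBG, ⟨C⟩, hB⟩ := exists_le_coloring_deg_le_two_mul (G := G)
  have hBd (v : V) : B.degree v ≤ d := by
    rw [← deg_eq_degree]
    exact (Set.ncard_le_ncard fun w hw => hBG hw).trans (hd v)
  have hBr (v : V) : r + τ ≤ B.degree v := by
    rw [← deg_eq_degree]
    exact Nat.le_of_mul_le_mul_left ((hr v).trans (hB v)) two_pos
  obtain ⟨ψ, hψ⟩ := exists_forall_uncrowded hBd hβ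
  obtain ⟨χ, hχ⟩ := exists_forall_le_deg_conflictFree_mixed C hψ hBd hBr hk hm hh hfail
  exact ⟨_, conflictFree_le.trans hBG, not_containsCopy_conflictFree hΓ, hχ⟩

end Existence

section Numerics

open Filter

theorem exists_prime_le_le_two_mul_add_two {x : ℝ} (hx : 0 < x) :
    ∃ p : ℕ, p.Prime ∧ x ≤ p ∧ (p : ℝ) ≤ 2 * x + 2 := by
  obtain ⟨p, hp, hlt, hle⟩ := Nat.exists_prime_lt_and_le_two_mul ⌈x⌉₊ (Nat.ceil_pos.2 hx).ne'
  refine ⟨p, hp, (Nat.le_ceil x).trans (by exact_mod_cast hlt.le), ?_⟩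
  have hle' : (p : ℝ) ≤ 2 * ⌈x⌉₊ := by exact_mod_cast hle
  linarith [Nat.ceil_lt_add_one hx.le]

theorem two_pow_le_exp (n : ℕ) : (2 : ℝ) ^ n ≤ Real.exp n := by
  rw [← Real.exp_one_pow]
  gcongr
  linarith [Real.add_one_le_exp 1]

theorem exp_half_le_two_pow (n : ℕ) : Real.exp (n / 2) ≤ 2 ^ n := by
  have hlog : (1 / 2 : ℝ) ≤ Real.log 2 := by linarith [Real.log_two_gt_d9]
  calc Real.exp (n / 2) ≤ Real.exp (n * Real.log 2) := by
        rw [div_eq_mul_one_div]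
        gcongr
    _ = 2 ^ n := by rw [Real.exp_nat_mul, Real.exp_log two_pos]

theorem two_pow_mul_exp_neg_le {t : ℕ} {d h m q r : ℝ} (hd : 0 ≤ d) (hm : 0 < m) (hq : 0 < q)
    (ht : t ≤ d / q / 20) (hr : 3 * d / 10 ≤ r) (hh : m ≤ 2 * h) :
    2 ^ t * Real.exp (-(r * (h / (2 * (m * q))))) ≤ Real.exp (-(d / q / 40)) := by
  have hexponent : 3 / 40 * (d / q) ≤ r * (h / (2 * (m * q))) :=
    calc 3 / 40 * (d / q) = 3 * d / 10 * (m / 2 / (2 * (m * q))) := by field_simp; ring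
      _ ≤ r * (h / (2 * (m * q))) := by
        gcongr <;> linarith
  calc 2 ^ t * Real.exp (-(r * (h / (2 * (m * q)))))
      ≤ Real.exp (d / q / 20) * Real.exp (-(3 / 40 * (d / q))) := by
        gcongr
        exact (two_pow_le_exp t).trans (Real.exp_le_exp.2 ht)
    _ = Real.exp (-(d / q / 40)) := by rw [← Real.exp_add]; ring_nf

theorem exp_mul_div_two_pow_le {L : ℕ} {d m q : ℝ} (hm : m ≠ 0) :
    Real.exp (d * (m / (m * q))) / 2 ^ L ≤ Real.exp (d / q - L / 2) := by
  rw [Real.exp_sub, div_mul_cancel_left₀ hm, ← div_eq_mul_inv]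
  gcongr
  exact exp_half_le_two_pow L

theorem add_sq_mul_mul_le_one {d x y z : ℝ} (hd : 1 ≤ d) (hx : x ≤ Real.exp (-z))
    (hy : y ≤ Real.exp (-z)) (hz : 2048 * d ^ 10 ≤ Real.exp z) :
    (x + d ^ 2 * y) * (4 * (d + 1) ^ 8) ≤ 1 :=
  calc (x + d ^ 2 * y) * (4 * (d + 1) ^ 8)
      ≤ (d ^ 2 * Real.exp (-z) + d ^ 2 * Real.exp (-z)) * (4 * (d + d) ^ 8) := by
        gcongr
        exact hx.trans (le_mul_of_one_le_left (Real.exp_nonneg _) (one_le_pow₀ hd))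
    _ = 2048 * d ^ 10 * Real.exp (-z) := by ring
    _ ≤ Real.exp z * Real.exp (-z) := by gcongr
    _ = 1 := by rw [← Real.exp_add, add_neg_cancel, Real.exp_zero]

theorem eventually_mul_pow_le_exp_mul_rpow {s b : ℝ} (hs : 0 < s) (hb : 0 < b) (c : ℝ) (k : ℕ) :
    ∀ᶠ x : ℝ in atTop, c * x ^ k ≤ Real.exp (b * x ^ s) := by
  have hlittleO : (fun x : ℝ => c * (x ^ s) ^ (k / s)) =o[atTop] fun x => Real.exp (b * x ^ s) :=
    ((isLittleO_rpow_exp_pos_mul_atTop (k / s) hb).const_mul_left c).comp_tendsto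
      (tendsto_rpow_atTop hs)
  filter_upwards [hlittleO.eventuallyLE, eventually_ge_atTop 0] with x hx hx0
  rw [← Real.rpow_mul hx0, mul_div_cancel₀ _ hs.ne', Real.rpow_natCast, Real.norm_eq_abs,
    Real.norm_eq_abs, Real.abs_exp] at hx
  exact (le_abs_self _).trans hx

theorem failure_mul_le_one {d m q : ℕ} {y : ℝ} (hy : 36 ≤ y) (hq : 0 < q)
    (hlow : y ^ 2 / 32 ≤ (d : ℝ) / q) (hupp : (d : ℝ) / q ≤ m / 400) (hm : 50 * y ^ 2 ≤ m)
    (hexp : 2048 * (d : ℝ) ^ 10 ≤ Real.exp (y ^ 2 / 1280)) :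
    (2 ^ (d / (20 * q)) * Real.exp (-((2 * d / 5 : ℕ) *
        ((m - 2 - 11 * (m / 40) : ℕ) / (2 * (m * q))))) +
      d ^ 2 * (Real.exp (d * (m / (m * q))) / 2 ^ (m / 40))) * (4 * ((d : ℝ) + 1) ^ 8) ≤ 1 := by
  have hq' : (0 : ℝ) < q := by exact_mod_cast hq
  have hy2 : 36 ^ 2 ≤ y ^ 2 := by gcongr
  have hd : (40 : ℝ) ≤ d := by
    linarith [div_le_self (Nat.cast_nonneg d) (Nat.one_le_cast (α := ℝ).2 hq)]
  have hd' : 40 ≤ d := by exact_mod_cast hd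
  have hm' : 100 ≤ m := by exact_mod_cast (by linarith : (100 : ℝ) ≤ m)
  refine add_sq_mul_mul_le_one (z := y ^ 2 / 1280) (by linarith) ?_ ?_ hexp
  · refine (two_pow_mul_exp_neg_le (Nat.cast_nonneg d) (by positivity) hq' ?_ ?_ ?_).trans
      (Real.exp_le_exp.2 (by linarith))
    · refine Nat.cast_div_le.trans_eq ?_
      push_cast
      field_simp
    · rw [div_le_iff₀' (by norm_num)]
      exact_mod_cast (by omega : 3 * d ≤ 10 * (2 * d / 5))
    · exact_mod_cast (by omega : m ≤ 2 * (m - 2 - 11 * (m / 40)))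
  · have hL : (m : ℝ) ≤ 40 * (m / 40 : ℕ) + 40 := by
      exact_mod_cast (by omega : m ≤ 40 * (m / 40) + 40)
    exact (exp_mul_div_two_pow_le (by positivity)).trans (Real.exp_le_exp.2 (by linarith))

theorem sq_div_le_natCast_div {d q : ℕ} {y : ℝ} (hy : 36 ≤ y) (hq : 0 < q)
    (hlow : y ^ 2 / 32 ≤ (d : ℝ) / q) : y ^ 2 / 1280 ≤ (d / (20 * q) : ℕ) := by
  have hfloor : (d : ℝ) / (20 * q) < (d / (20 * q) : ℕ) + 1 := by
    rw [div_lt_iff₀ (by positivity)]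
    rw [mul_comm]
    exact_mod_cast Nat.lt_mul_div_succ d (by positivity)
  have hsplit : (d : ℝ) / (20 * q) = d / q / 20 := by rw [div_div, mul_comm]
  have hy2 : 36 ^ 2 ≤ y ^ 2 := by gcongr
  linarith

theorem mul_self_lt_mul_div_ten_add_one {d n : ℕ} (hd : 0 < d) (hn : 10 * d ≤ n) :
    d * d < n * (d / 10 + 1) :=
  calc d * d < d * (10 * (d / 10 + 1)) := by gcongr; omega
    _ = 10 * d * (d / 10 + 1) := by ring
    _ ≤ n * (d / 10 + 1) := by gcongr

variable {p : ℕ} {y : ℝ}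

theorem fifty_mul_sq_le_sq_div_two (hy : 1 ≤ y) (hp : 15 * y ≤ p) :
    50 * y ^ 2 ≤ (p ^ 2 / 2 : ℕ) := by
  have hsq : (15 * y) ^ 2 ≤ (p : ℝ) ^ 2 := by gcongr
  have hdiv : (p : ℝ) ^ 2 ≤ 2 * (p ^ 2 / 2 : ℕ) + 1 := by
    exact_mod_cast (by omega : p ^ 2 ≤ 2 * (p ^ 2 / 2) + 1)
  linarith [one_le_pow₀ hy (n := 2)]

theorem sq_div_le_cube_div_pred (hp : 1 < p) (hp' : p ≤ 32 * y) :
    y ^ 2 / 32 ≤ y ^ 3 / (p - 1 : ℕ) := by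
  have hq : (0 : ℝ) < (p - 1 : ℕ) := by exact_mod_cast Nat.sub_pos_of_lt hp
  rw [le_div_iff₀ hq, Nat.cast_pred (Nat.zero_lt_of_lt hp)]
  calc y ^ 2 / 32 * (p - 1) ≤ y ^ 2 / 32 * (32 * y) := by gcongr; linarith
    _ = y ^ 3 := by ring

theorem cube_div_pred_le (hy : 1 ≤ y) (hp : 15 * y ≤ p) :
    y ^ 3 / (p - 1 : ℕ) ≤ (p ^ 2 / 2 : ℕ) / 400 := by
  have hp0 : 0 < p := by exact_mod_cast (by linarith : (0 : ℝ) < p)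
  have hq : 14 * y ≤ (p - 1 : ℕ) := by
    rw [Nat.cast_pred hp0]
    linarith
  calc y ^ 3 / (p - 1 : ℕ) ≤ y ^ 3 / (14 * y) := by gcongr
    _ = y ^ 2 / 14 := by field_simp
    _ ≤ 50 * y ^ 2 / 400 := by linarith [sq_nonneg y]
    _ ≤ (p ^ 2 / 2 : ℕ) / 400 := by gcongr; exact fifty_mul_sq_le_sq_div_two hy hp

end Numerics

theorem exists_le_not_containsCopy_forall_sq_le_deg {V : Type*} [Finite V] {G : SimpleGraph V}
    {d p : ℕ} {y : ℝ} (hG : RegularDeg G d) (hp : p.Prime) (hy : 36 ≤ y) (hyd : y ^ 3 = d)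
    (hyp : 15 * y ≤ p) (hpy : p ≤ 32 * y)
    (hexp : 2048 * (d : ℝ) ^ 10 ≤ Real.exp (y ^ 2 / 1280)) :
    ∃ H ≤ G, ¬ ContainsCopy (completeBipartiteGraph (Fin 3) (Fin 3)) H ∧
      ∀ v, y ^ 2 / 1280 ≤ deg H v := by
  have := Fact.mk hp
  obtain ⟨α, β, _, _, Γ, hΓ, hα, hβ, hdeg⟩ := exists_sum_normGraph p
  have hq : 0 < p - 1 := Nat.sub_pos_of_lt hp.one_lt
  have hm := fifty_mul_sq_le_sq_div_two (by linarith) hyp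
  have hlow := sq_div_le_cube_div_pred hp.one_lt hpy
  have hupp := cube_div_pred_le (by linarith) hyp
  rw [hyd] at hlow hupp
  generalize p - 1 = q at *
  generalize p ^ 2 / 2 = m at *
  have hm' : 40 ≤ m := by exact_mod_cast (by nlinarith : (40 : ℝ) ≤ m)
  have hd : 0 < d := by exact_mod_cast hyd ▸ (by positivity : 0 < y ^ 3)
  have hdβ : 10 * d ≤ Fintype.card β := by
    refine le_trans ?_ hβ
    rw [div_le_iff₀ (by positivity)] at hupp
    exact_mod_cast (by linarith : 10 * (d : ℝ) ≤ m * q)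
  have : Nonempty α := Fintype.card_pos_iff.1 (by rw [hα]; positivity)
  have hcompat (c : α ⊕ β) := (hdeg c).2
  -- `τ = d / 10` leaves `2 d / 5` edges at each vertex out of conflict, and at most
  -- `11 L = 11 m / 40` of about `m` compatible colours are lost to conflicts at the other end.
  obtain ⟨H, hHG, hH, ht⟩ := exists_le_not_containsCopy_forall_le_deg
    (d := d) (h := m - 2 - 11 * (m / 40)) (k := 10) (L := m / 40) (r := 2 * d / 5)
    (t := d / (20 * q)) (τ := d / 10) hΓ (fun v => (hG v).le) (fun v => by rw [hG v]; omega)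
    (mul_self_lt_mul_div_ten_add_one hd hdβ) (by omega) (fun c => (hdeg c).1)
    (fun c => by linarith [hcompat c, (by omega : m - 2 - 11 * (m / 40) + 11 * (m / 40) + 2 = m)])
    (by rw [hα]; exact_mod_cast failure_mul_le_one hy hq hlow hupp hm hexp)
  refine ⟨H, hHG, hH, fun v => ?_⟩
  exact (sq_div_le_natCast_div hy hq hlow).trans (Nat.cast_le.2 (ht v))

theorem statement13_general :
    ∃ (c : ℝ) (d₀ : ℕ), 0 < c ∧ ∀ d : ℕ, d₀ ≤ d →
      ∀ (V : Type*) [Finite V] (G : SimpleGraph V), RegularDeg G d →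
        ∃ H : SimpleGraph V, H ≤ G ∧
          ¬ ContainsCopy (completeBipartiteGraph (Fin 3) (Fin 3)) H ∧
          ∀ v : V, c * (d : ℝ) ^ ((2 : ℝ) / 3) ≤ (deg H v : ℝ) := by
  have hlarge : ∀ᶠ x : ℝ in Filter.atTop,
      36 ≤ x ^ ((1 : ℝ) / 3) ∧ 2048 * x ^ 10 ≤ Real.exp (1 / 1280 * x ^ ((2 : ℝ) / 3)) :=
    ((tendsto_rpow_atTop (by norm_num)).eventually_ge_atTop 36).and
      (eventually_mul_pow_le_exp_mul_rpow (by norm_num) (by norm_num) 2048 10)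
  obtain ⟨d₀, hd₀⟩ := Filter.eventually_atTop.1 (tendsto_natCast_atTop_atTop.eventually hlarge)
  refine ⟨1 / 1280, d₀, by norm_num, fun d hd V _ G hG => ?_⟩
  obtain ⟨hy, hexp⟩ := hd₀ d hd
  set y : ℝ := (d : ℝ) ^ ((1 : ℝ) / 3) with hyd
  have hy3 : y ^ 3 = d := by
    rw [hyd, ← Real.rpow_mul_natCast (Nat.cast_nonneg d)]
    norm_num
  have hy2 : (d : ℝ) ^ ((2 : ℝ) / 3) = y ^ 2 := by
    rw [hyd, ← Real.rpow_mul_natCast (Nat.cast_nonneg d)]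
    norm_num
  simp only [hy2, one_div_mul_eq_div] at hexp ⊢
  obtain ⟨p, hp, hyp, hpy⟩ := exists_prime_le_le_two_mul_add_two (by linarith : 0 < 15 * y)
  exact exists_le_not_containsCopy_forall_sq_le_deg hG hp hy hy3 hyp (by linarith) hexp

theorem statement13 (b : ℕ) (hb : 3 ≤ b) :
    ∃ (c : ℝ) (d₀ : ℕ), 0 < c ∧
      ∀ d : ℕ, d₀ ≤ d →
        ∀ (V : Type) [Fintype V] (G : SimpleGraph V), RegularDeg G d →
          ∃ H : SimpleGraph V, H ≤ G ∧
            ¬ ContainsCopy (completeBipartiteGraph (Fin 3) (Fin b)) H ∧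
            ∀ v : V, c * (d : ℝ) ^ ((2 : ℝ) / 3) ≤ (deg H v : ℝ) := by
  obtain ⟨c, d₀, hc, h⟩ := statement13_general
  refine ⟨c, d₀, hc, fun d hd V _ G hG => ?_⟩
  obtain ⟨H, hHG, hH, hdeg⟩ := h d hd V G hG
  exact ⟨H, hHG, mt (.completeBipartiteGraph_mono (.refl _) (Fin.castLEEmb hb)) hH, hdeg⟩
end
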